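/- arXiv:1809.06525 — 3 statements merged into one kernel-verified Lean document; each statement's English description precedes it below -/
import Mathlib

section
/- Let H be a real Hilbert space and β > 0. Let f : H → ℝ be convex with a gradient map f' : H → H (f has gradient f'(x) at every x ∈ H) such that f' is Lipschitz with constant 1/β, and let g : H → ℝ be convex and lower semicontinuous. Suppose the set Ω of minimizers of f + g is nonempty. Assume the variable-metric hypotheses of the context: operators U_k, V_k with ⟨U_k x, x⟩ ≥ α‖x‖² (α > 0), V_k∘U_k = U_k∘V_k = id, ‖U_k‖ ≤ μ, (1 + η_k)⟨U_{k+1}x, x⟩ ≥ ⟨U_k x, x⟩ with η_k ≥ 0 summable; parameters γ_k ∈ (0, 2β/‖U_k‖), α_k := 2β/(4β − γ_k‖U_k‖), λ_k ∈ (0, 1/α_k) with λ̲ ≤ λ_k ≤ 1/α_k − τ (λ̲, τ > 0) and γ_k ≥ γ̲ > 0; errors a_k, b_k with ∑_k λ_k‖a_k‖ < ∞, ∑_k λ_k‖b_k‖ < ∞; and proximal maps P_k : H → H satisfying, for all y, z ∈ H, γ_k·g(z) ≥ γ_k·g(P_k y) + ⟨V_k(y − P_k y), z − P_k y⟩. Define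 from x_0 ∈ H the iteration x_{k+1} = x_k + λ_k·(P_k(x_k − γ_k·U_k(f'(x_k) + b_k)) + a_k − x_k). Then there exists p ∈ Ω such that x_k converges weakly to p, i.e., ⟨x_k, y⟩ → ⟨p, y⟩ for every y ∈ H. -/
open RealInnerProductSpace Filter

section helpers
variable {H : Type*} [NormedAddCommGroup H] [InnerProductSpace ℝ H]

lemma hlp_prod (s : ℕ → ℝ) (hs : ∀ k, 0 ≤ s k) (hsum : Summable s) :
    ∃ (Q : ℕ → ℝ) (L : ℝ), (∀ k, 1 ≤ Q k) ∧ (∀ k, Q (k+1) = (1 + s k) * Q k) ∧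
      Tendsto Q atTop (nhds L) ∧ 1 ≤ L := by
  set Q : ℕ → ℝ := fun k => ∏ j ∈ Finset.range k, (1 + s j) with hQ
  have hrec : ∀ k, Q (k+1) = (1 + s k) * Q k := by
    intro k; simp only [hQ]; rw [Finset.prod_range_succ, mul_comm]
  have h1 : ∀ k, 1 ≤ Q k := by
    intro k
    induction k with
    | zero => simp [hQ]
    | succ k ih => rw [hrec]; nlinarith [hs k]
  have hmono : Monotone Q := monotone_nat_of_le_succ (fun k => by
    rw [hrec]; nlinarith [hs k, h1 k])
  have hbd : ∀ k, Q k ≤ Real.exp (∑' j, s j) := by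
    intro k
    calc Q k ≤ ∏ j ∈ Finset.range k, Real.exp (s j) := by
          apply Finset.prod_le_prod
          · intro i _; linarith [hs i]
          · intro i _; linarith [Real.add_one_le_exp (s i)]
      _ = Real.exp (∑ j ∈ Finset.range k, s j) := (Real.exp_sum _ _).symm
      _ ≤ _ := Real.exp_le_exp.2 (hsum.sum_le_tsum _ (fun i _ => hs i))
  have hL := tendsto_atTop_ciSup hmono ⟨_, by rintro _ ⟨k, rfl⟩; exact hbd k⟩
  exact ⟨Q, _, h1, hrec, hL, ge_of_tendsto' hL h1⟩

lemma hlp_anti (A : ℕ → ℝ) (hA : Antitone A) (m : ℝ) (hm : ∀ k, m ≤ A k) :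
    ∃ L, Tendsto A atTop (nhds L) :=
  ⟨_, tendsto_atTop_ciInf hA ⟨m, by rintro _ ⟨k, rfl⟩; exact hm k⟩⟩

lemma hlp_RS (A B s t : ℕ → ℝ) (hA : ∀ k, 0 ≤ A k) (hB : ∀ k, 0 ≤ B k)
    (hs : ∀ k, 0 ≤ s k) (ht : ∀ k, 0 ≤ t k) (hss : Summable s) (hts : Summable t)
    (h : ∀ k, A (k+1) + B k ≤ (1 + s k) * A k + t k) :
    (∃ L, Tendsto A atTop (nhds L)) ∧ Tendsto B atTop (nhds 0) := by
  obtain ⟨Q, L, hQ1, hQr, hQL, hL1⟩ := hlp_prod s hs hss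
  have key : ∃ L', Tendsto (fun k => A k / Q k - ∑ j ∈ Finset.range k, t j) atTop (nhds L') := by
    refine hlp_anti _ (antitone_nat_of_succ_le ?_) (-(∑' j, t j)) ?_
    · intro k
      rw [Finset.sum_range_succ]
      have hq := hQ1 k
      have hq' := hQ1 (k+1)
      have h2 : A (k+1) / Q (k+1) ≤ A k / Q k + t k := by
        rw [div_le_iff₀ (by linarith)]
        have : (A k / Q k + t k) * Q (k+1) = (1 + s k) * A k + t k * Q (k+1) := by
          rw [hQr]; field_simp
        rw [this]
        nlinarith [h k, hB k, ht k]
      linarith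
    · intro k
      have h1 := hts.sum_le_tsum (Finset.range k) (fun i _ => ht i)
      have h2 : 0 ≤ A k / Q k := div_nonneg (hA k) (by linarith [hQ1 k])
      linarith
  obtain ⟨L', hL'⟩ := key
  have hAL : Tendsto A atTop (nhds ((L' + ∑' j, t j) * L)) := by
    have := (hL'.add hts.hasSum.tendsto_sum_nat).mul hQL
    refine this.congr (fun k => ?_)
    have := hQ1 k
    have h0 : Q k ≠ 0 := by linarith
    field_simp
    ring
  refine ⟨⟨_, hAL⟩, ?_⟩
  have hup : Tendsto (fun k => (1 + s k) * A k + t k - A (k+1)) atTop (nhds 0) := by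
    have := (((tendsto_const_nhds (x := (1:ℝ))).add hss.tendsto_atTop_zero).mul hAL).add
      hts.tendsto_atTop_zero |>.sub (hAL.comp (tendsto_add_atTop_nat 1))
    simpa using this
  exact squeeze_zero hB (fun k => by linarith [h k]) hup

lemma hlp_psd (D : H →L[ℝ] H) (hs : ∀ x y, ⟪D x, y⟫ = ⟪x, D y⟫) (C : ℝ) (hC : 0 < C)
    (h0 : ∀ w, 0 ≤ ⟪D w, w⟫) (h1 : ∀ w, ⟪D w, w⟫ ≤ C * ‖w‖^2) (v : H) :
    ‖D v‖^2 ≤ C * ⟪D v, v⟫ := by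
  have h := h0 (v - (1/C) • D v)
  have e1 := hs (D v) v
  have e2 := h1 (D v)
  simp only [map_sub, map_smul, inner_sub_left, inner_sub_right, inner_smul_left,
    inner_smul_right, conj_trivial, e1, real_inner_self_eq_norm_sq] at h
  have e3 : (1/C) * ((1/C) * ⟪D (D v), D v⟫) ≤ (1/C) * ((1/C) * (C * ‖D v‖^2)) := by gcongr
  have e4 : (1/C) * ((1/C) * (C * ‖D v‖^2)) = (1/C) * ‖D v‖^2 := by field_simp
  have e5 : (1/C) * ‖D v‖^2 ≤ ⟪D v, v⟫ := by linarith
  rw [div_mul_eq_mul_div, div_le_iff₀ hC] at e5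
  linarith

lemma hlp_U_le (U V : H →L[ℝ] H) (hU : ∀ x y, ⟪U x, y⟫ = ⟪x, U y⟫)
    (α : ℝ) (hα : 0 < α) (hpos : ∀ z, ⟪U z, z⟫ ≥ α * ‖z‖^2) (hN : 0 < ‖U‖)
    (hUV : ∀ z, U (V z) = z) (w : H) : ‖w‖^2 ≤ ‖U‖ * ⟪V w, w⟫ := by
  have := hlp_psd U hU ‖U‖ hN (fun w => le_trans (by positivity) (hpos w)) (fun w => by
    calc ⟪U w, w⟫ ≤ ‖U w‖ * ‖w‖ := real_inner_le_norm _ _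
      _ ≤ (‖U‖ * ‖w‖) * ‖w‖ := by gcongr; exact U.le_opNorm w
      _ = _ := by ring) (V w)
  rwa [hUV, real_inner_comm] at this

lemma hlp_V (U V : H →L[ℝ] H)
    (α : ℝ) (hα : 0 < α) (hpos : ∀ z, ⟪U z, z⟫ ≥ α * ‖z‖^2)
    (hUV : ∀ z, U (V z) = z) (w : H) :
    0 ≤ ⟪V w, w⟫ ∧ ⟪V w, w⟫ ≤ (1/α) * ‖w‖^2 ∧ ‖V w‖ ≤ (1/α) * ‖w‖ := by
  have h := hpos (V w)
  rw [hUV, real_inner_comm] at h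
  have h2 : ⟪V w, w⟫ ≤ ‖V w‖ * ‖w‖ := real_inner_le_norm _ _
  have h3 : ‖V w‖ ≤ (1/α) * ‖w‖ := by
    rw [div_mul_eq_mul_div, le_div_iff₀ hα, one_mul]
    by_contra hc
    push Not at hc
    have : 0 < ‖V w‖ := by
      rcases (norm_nonneg (V w)).eq_or_lt with h | h
      · rw [← h] at hc; simp at hc; linarith [norm_nonneg w]
      · exact h
    nlinarith
  refine ⟨le_trans (by positivity) h, ?_, h3⟩
  calc _ ≤ _ := h2
    _ ≤ ((1/α) * ‖w‖) * ‖w‖ := by gcongr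
    _ = _ := by ring

lemma hlp_V_mono (U V U' V' : H →L[ℝ] H) (hU : ∀ x y, ⟪U x, y⟫ = ⟪x, U y⟫)
    (c : ℝ) (hc : 0 < c) (hp : ∀ z, 0 ≤ ⟪U z, z⟫)
    (hmono : ∀ z, c * ⟪U' z, z⟫ ≥ ⟪U z, z⟫)
    (hUV : ∀ z, U (V z) = z) (hUV' : ∀ z, U' (V' z) = z) (w : H) :
    ⟪V' w, w⟫ ≤ c * ⟪V w, w⟫ := by
  have h := hp (V w - (1/c) • V' w)
  have h2 := hmono (V' w)
  have e1 := hU (V' w) (V w)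
  rw [hUV] at e1
  rw [hUV'] at h2
  simp only [map_sub, map_smul, inner_sub_left, inner_sub_right, inner_smul_left,
    inner_smul_right, conj_trivial, e1, hUV] at h
  rw [real_inner_comm w (V' w)] at *
  rw [real_inner_comm w (V w)] at *
  have e3 : (1/c) * ((1/c) * ⟪U (V' w), V' w⟫) ≤ (1/c) * ((1/c) * (c * ⟪w, V' w⟫)) := by 
    gcongr
  have e4 : (1/c) * ((1/c) * (c * ⟪w, V' w⟫)) = (1/c) * ⟪w, V' w⟫ := by field_simp
  have e5 : (1/c) * ⟪w, V' w⟫ ≤ ⟪w, V w⟫ := by linarith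
  rw [div_mul_eq_mul_div, div_le_iff₀ hc] at e5
  linarith

lemma hlp_V_lim [CompleteSpace H] (V : ℕ → H →L[ℝ] H) (hV : ∀ k x y, ⟪V k x, y⟫ = ⟪x, V k y⟫)
    (C : ℝ) (hC : 0 < C) (h0 : ∀ k w, 0 ≤ ⟪V k w, w⟫) (h1 : ∀ k w, ⟪V k w, w⟫ ≤ C * ‖w‖^2)
    (η : ℕ → ℝ) (hη0 : ∀ k, 0 ≤ η k) (hηsum : Summable η)
    (hm : ∀ k w, ⟪V (k+1) w, w⟫ ≤ (1 + η k) * ⟪V k w, w⟫) (v : H) :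
    ∃ l, Tendsto (fun k => V k v) atTop (nhds l) := by
  obtain ⟨Q, L, hQ1, hQr, hQL, hL1⟩ := hlp_prod η hη0 hηsum
  have hQ0 : ∀ k, 0 < Q k := fun k => by linarith [hQ1 k]
  have hanti : ∀ w, Antitone (fun k => (Q k)⁻¹ * ⟪V k w, w⟫) := by
    intro w
    refine antitone_nat_of_succ_le (fun k => ?_)
    have := hm k w
    have a1 := hQ0 k
    have a2 := hη0 k
    rw [hQr, mul_inv]
    calc (1 + η k)⁻¹ * (Q k)⁻¹ * ⟪V (k+1) w, w⟫
        ≤ (1 + η k)⁻¹ * (Q k)⁻¹ * ((1 + η k) * ⟪V k w, w⟫) := by gcongr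
      _ = _ := by field_simp
  obtain ⟨l, hl⟩ := hlp_anti _ (hanti v) 0 (fun k => mul_nonneg (inv_nonneg.2 (hQ0 k).le) (h0 k v))
  have hdiff : ∀ n m, n ≤ m → ‖(Q n)⁻¹ • V n v - (Q m)⁻¹ • V m v‖^2 ≤
      C * ((Q n)⁻¹ * ⟪V n v, v⟫ - (Q m)⁻¹ * ⟪V m v, v⟫) := by
    intro n m hnm
    have := hlp_psd ((Q n)⁻¹ • V n - (Q m)⁻¹ • V m) (fun x y => by
      simp [inner_sub_left, inner_sub_right, inner_smul_left, inner_smul_right, hV]) C hC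
      (fun w => by
        have := hanti w hnm
        simp only [sub_apply, smul_apply, inner_sub_left,
          inner_smul_left, conj_trivial]
        simp only at this
        linarith)
      (fun w => by
        simp only [sub_apply, smul_apply, inner_sub_left,
          inner_smul_left, conj_trivial]
        have b1 : 0 ≤ (Q m)⁻¹ * ⟪V m w, w⟫ := mul_nonneg (inv_nonneg.2 (hQ0 m).le) (h0 m w)
        have b2 : (Q n)⁻¹ * ⟪V n w, w⟫ ≤ 1 * ⟪V n w, w⟫ :=
          mul_le_mul_of_nonneg_right (inv_le_one_of_one_le₀ (hQ1 n)) (h0 n w)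
        linarith [h1 n w]) v
    simpa only [sub_apply, smul_apply, inner_sub_left,
          inner_smul_left, conj_trivial] using this
  have hcau : CauchySeq (fun k => (Q k)⁻¹ • V k v) := by
    rw [Metric.cauchySeq_iff']
    intro ε hε
    obtain ⟨N, hN⟩ := (Metric.cauchySeq_iff'.1 hl.cauchySeq) (ε^2/C) (by positivity)
    refine ⟨N, fun n hn => ?_⟩
    have b1 := hdiff N n hn
    have b2 := hN n hn
    rw [Real.dist_eq, abs_lt] at b2
    rw [dist_eq_norm, norm_sub_rev]
    have b3 : C * ((Q N)⁻¹ * ⟪V N v, v⟫ - (Q n)⁻¹ * ⟪V n v, v⟫) < C * (ε^2/C) := by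
      gcongr; linarith
    have b4 : C * (ε^2/C) = ε^2 := by field_simp
    exact lt_of_pow_lt_pow_left₀ 2 hε.le (by linarith)
  obtain ⟨y, hy⟩ := cauchySeq_tendsto_of_complete hcau
  refine ⟨L • y, (hQL.smul hy).congr (fun k => ?_)⟩
  rw [smul_smul, mul_inv_cancel₀ (hQ0 k).ne', one_smul]

end helpers

section helpers2
variable {H : Type*} [NormedAddCommGroup H] [InnerProductSpace ℝ H] [CompleteSpace H]

lemma hlp_line (f : H → ℝ) (f' : H → H) (hf : ∀ z, HasGradientAt f (f' z) z) (x d : H) (t : ℝ) :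
    HasDerivAt (fun t : ℝ => f (x + t • d)) ⟪f' (x + t • d), d⟫ t := by
  have h1 : HasDerivAt (fun t : ℝ => x + t • d) d t := by
    simpa using ((hasDerivAt_id t).smul_const d).const_add x
  have h2 := (hf (x + t • d)).hasFDerivAt.comp_hasDerivAt t h1
  have e : (InnerProductSpace.toDual ℝ H (f' (x + t • d))) d = ⟪f' (x + t • d), d⟫ := by simp
  rw [e] at h2
  exact h2

lemma hlp_cvx_ineq (f : H → ℝ) (f' : H → H)
    (hf : ∀ z, HasGradientAt f (f' z) z) (g : H → ℝ) (hg : ConvexOn ℝ Set.univ g) (z w : H)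
    (hz : ∀ y, f z + g z ≤ f y + g y) : g z - ⟪f' z, w - z⟫ ≤ g w := by
  have hd := hlp_line f f' hf z (w - z) 0
  simp only [zero_smul, add_zero] at hd
  rw [hasDerivAt_iff_tendsto_slope_zero] at hd
  have hd' := hd.mono_left (nhdsWithin_mono 0 (s := Set.Ioi 0) (fun t (ht : 0 < t) => ht.ne'))
  have : g z - g w ≤ ⟪f' z, w - z⟫ := by
    refine ge_of_tendsto hd' ?_
    have : ∀ᶠ t : ℝ in nhdsWithin 0 (Set.Ioi 0), t ∈ Set.Ioo (0:ℝ) 1 :=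
      Ioo_mem_nhdsGT one_pos
    filter_upwards [this] with t ht
    have h1 := hz (z + t • (w - z))
    have h2 := hg.2 (Set.mem_univ z) (Set.mem_univ w) (by linarith [ht.2] : 0 ≤ 1 - t) ht.1.le
      (by ring)
    have h3 : (1 - t) • z + t • w = z + t • (w - z) := by module
    rw [h3] at h2
    simp only [smul_eq_mul] at h2
    simp only [zero_add, zero_smul, add_zero, smul_eq_mul]
    rw [inv_mul_eq_div, le_div_iff₀ ht.1]
    nlinarith
  linarith

lemma hlp_grad_ineq (f : H → ℝ) (f' : H → H) (hc : ConvexOn ℝ Set.univ f)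
    (hf : ∀ z, HasGradientAt f (f' z) z) (z w : H) : f z + ⟪f' z, w - z⟫ ≤ f w := by
  have hd := hlp_line f f' hf z (w - z) 0
  simp only [zero_smul, add_zero] at hd
  rw [hasDerivAt_iff_tendsto_slope_zero] at hd
  have hd' := hd.mono_left (nhdsWithin_mono 0 (s := Set.Ioi 0) (fun t (ht : 0 < t) => ht.ne'))
  have : ⟪f' z, w - z⟫ ≤ f w - f z := by
    refine le_of_tendsto hd' ?_
    have : ∀ᶠ t : ℝ in nhdsWithin 0 (Set.Ioi 0), t ∈ Set.Ioo (0:ℝ) 1 :=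
      Ioo_mem_nhdsGT one_pos
    filter_upwards [this] with t ht
    have h2 := hc.2 (Set.mem_univ z) (Set.mem_univ w) (by linarith [ht.2] : 0 ≤ 1 - t) ht.1.le
      (by ring)
    have h3 : (1 - t) • z + t • w = z + t • (w - z) := by module
    rw [h3] at h2
    simp only [smul_eq_mul] at h2
    simp only [zero_add, zero_smul, add_zero, smul_eq_mul]
    rw [inv_mul_eq_div, div_le_iff₀ ht.1]
    nlinarith
  linarith

lemma hlp_descent (β : ℝ) (hβ : 0 < β) (f : H → ℝ) (f' : H → H)
    (hf : ∀ z, HasGradientAt f (f' z) z)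
    (hl : ∀ z w : H, ‖f' z - f' w‖ ≤ (1 / β) * ‖z - w‖) (x d : H) :
    f (x + d) ≤ f x + ⟪f' x, d⟫ + 1 / (2 * β) * ‖d‖^2 := by
  set ψ : ℝ → ℝ := fun t => f (x + t • d) - (t * ⟪f' x, d⟫ + t^2 * (1 / (2*β) * ‖d‖^2)) with hψ
  have hder : ∀ t, HasDerivAt ψ (⟪f' (x + t • d), d⟫ -
      (1 * ⟪f' x, d⟫ + (2 * t) * (1 / (2*β) * ‖d‖^2))) t := by
    intro t
    refine (hlp_line f f' hf x d t).sub (((hasDerivAt_id t).mul_const _).add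
      (HasDerivAt.mul_const ?_ _))
    simpa using hasDerivAt_pow 2 t
  have hanti : AntitoneOn ψ (Set.Icc 0 1) := by
    refine antitoneOn_of_deriv_nonpos (convex_Icc 0 1)
      (fun t _ => (hder t).continuousAt.continuousWithinAt)
      (fun t _ => (hder t).differentiableAt.differentiableWithinAt) ?_
    intro t ht
    rw [interior_Icc] at ht
    rw [(hder t).deriv]
    have h1 : ⟪f' (x + t • d) - f' x, d⟫ ≤ ‖f' (x + t • d) - f' x‖ * ‖d‖ := real_inner_le_norm _ _
    have h2 := hl (x + t • d) x
    rw [add_sub_cancel_left, norm_smul, Real.norm_of_nonneg ht.1.le] at h2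
    rw [inner_sub_left] at h1
    have h3 : ‖f' (x + t • d) - f' x‖ * ‖d‖ ≤ 1/β * (t * ‖d‖) * ‖d‖ := by gcongr
    have h4 : (2 * t) * (1 / (2*β) * ‖d‖^2) = 1/β * (t * ‖d‖) * ‖d‖ := by field_simp
    linarith
  have := hanti (by simp) (by simp) (zero_le_one' ℝ)
  simp [hψ] at this
  simp only [one_div, mul_inv]
  linarith

lemma hlp_BH (β : ℝ) (hβ : 0 < β) (f : H → ℝ) (f' : H → H) (hc : ConvexOn ℝ Set.univ f)
    (hf : ∀ z, HasGradientAt f (f' z) z)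
    (hl : ∀ z w : H, ‖f' z - f' w‖ ≤ (1 / β) * ‖z - w‖) (x y : H) :
    β * ‖f' x - f' y‖^2 ≤ ⟪f' x - f' y, x - y⟫ := by
  have key : ∀ x y, f x + ⟪f' x, y - x⟫ + β/2 * ‖f' y - f' x‖^2 ≤ f y := by
    intro x y
    have h1 := hlp_descent β hβ f f' hf hl y (-(β • (f' y - f' x)))
    have h2 := hlp_grad_ineq f f' hc hf x (y + -(β • (f' y - f' x)))
    have e : y + -(β • (f' y - f' x)) - x = (y - x) - β • (f' y - f' x) := by abel
    rw [e, inner_sub_right, inner_smul_right] at h2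
    rw [inner_neg_right, inner_smul_right, norm_neg, norm_smul, Real.norm_of_nonneg hβ.le] at h1
    have e2 : ⟪f' y, f' y - f' x⟫ - ⟪f' x, f' y - f' x⟫ = ‖f' y - f' x‖^2 := by
      rw [← inner_sub_left, real_inner_self_eq_norm_sq]
    have e3 : 1/(2*β) * (β * ‖f' y - f' x‖)^2 = β/2 * ‖f' y - f' x‖^2 := by field_simp
    have e4 : β * ⟪f' y, f' y - f' x⟫ = β * ⟪f' x, f' y - f' x⟫ + β * ‖f' y - f' x‖^2 := by
      rw [← e2]; ring
    linarith
  have h1 := key x y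
  have h2 := key y x
  rw [norm_sub_rev] at h1
  have e : ⟪f' x - f' y, x - y⟫ = -⟪f' x, y - x⟫ - ⟪f' y, x - y⟫ := by
    rw [inner_sub_left, ← inner_neg_right, neg_sub]
  rw [e]
  linarith

/-- one-step averaged estimate -/
lemma hlp_step (β : ℝ) (hβ : 0 < β) (U V : H →L[ℝ] H)
    (hV : ∀ x y, ⟪V x, y⟫ = ⟪x, V y⟫) (hVU : ∀ z, V (U z) = z)
    (hUle : ∀ w, ‖w‖^2 ≤ ‖U‖ * ⟪V w, w⟫)
    (f' : H → H) (hBH : ∀ x y, β * ‖f' x - f' y‖^2 ≤ ⟪f' x - f' y, x - y⟫)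
    (g : H → ℝ) (γ lam : ℝ) (hγ : 0 < γ) (hlam : 0 ≤ lam) (P : H → H)
    (hP : ∀ y z : H, γ * g z ≥ γ * g (P y) + ⟪V (y - P y), z - P y⟫)
    (z : H) (hz : ∀ w, g z - ⟪f' z, w - z⟫ ≤ g w) (x y : H)
    (hy : y = P (x - γ • U (f' x))) :
    ⟪V (x + lam • (y - x) - z), x + lam • (y - x) - z⟫ ≤ ⟪V (x - z), x - z⟫ -
      lam * (2 - γ * ‖U‖ / (2 * β) - lam) * ⟪V (x - y), x - y⟫ := by
  have h1 := hP (x - γ • U (f' x)) z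
  rw [← hy] at h1
  have h2 := mul_le_mul_of_nonneg_left (hz y) hγ.le
  have e1 : V (x - γ • U (f' x) - y) = V (x - y) - γ • f' x := by
    simp only [map_sub, map_smul, hVU]; abel
  rw [e1, inner_sub_left, inner_smul_left, conj_trivial] at h1
  -- monotone
  have h3 : γ * ⟪f' x - f' z, y - z⟫ ≤ ⟪V (x - y), y - z⟫ := by
    have a1 : ⟪V (x - y), z - y⟫ = - ⟪V (x - y), y - z⟫ := by rw [← inner_neg_right, neg_sub]
    have a2 : ⟪f' x, z - y⟫ = - ⟪f' x, y - z⟫ := by rw [← inner_neg_right, neg_sub]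
    rw [a1, a2] at h1
    rw [inner_sub_left]
    linarith
  have h4 := hBH x z
  have h5 : ⟪f' x - f' z, y - z⟫ = ⟪f' x - f' z, x - z⟫ - ⟪f' x - f' z, x - y⟫ := by
    rw [← inner_sub_right]; congr 1; abel
  have h6 : ⟪f' x - f' z, x - y⟫ ≤ ‖f' x - f' z‖ * ‖x - y‖ := real_inner_le_norm _ _
  have h7 : -(1/(4*β) * ‖x - y‖^2) ≤ ⟪f' x - f' z, y - z⟫ := by
    have : 0 ≤ 1/(4*β) * (2 * β * ‖f' x - f' z‖ - ‖x - y‖)^2 := by positivity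
    have e : 1/(4*β) * (2 * β * ‖f' x - f' z‖ - ‖x - y‖)^2 = β * ‖f' x - f' z‖^2
      - ‖f' x - f' z‖ * ‖x - y‖ + 1/(4*β) * ‖x - y‖^2 := by field_simp; ring
    linarith
  have h8 : -(γ * ‖U‖ / (4 * β) * ⟪V (x - y), x - y⟫) ≤ ⟪V (x - y), y - z⟫ := by
    have a1 : γ * (1/(4*β) * ‖x - y‖^2) ≤ γ * (1/(4*β) * (‖U‖ * ⟪V (x - y), x - y⟫)) := by
      gcongr; exact hUle _
    have a2 : γ * (1/(4*β) * (‖U‖ * ⟪V (x - y), x - y⟫)) =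
      γ * ‖U‖ / (4 * β) * ⟪V (x - y), x - y⟫ := by ring
    have a3 := mul_le_mul_of_nonneg_left h7 hγ.le
    linarith
  have e2 : x + lam • (y - x) - z = (1 - lam) • (x - y) + (y - z) := by module
  have e3 : x - z = (x - y) + (y - z) := by abel
  have e4 : ⟪V (y - z), x - y⟫ = ⟪V (x - y), y - z⟫ := by rw [hV, real_inner_comm]
  have e5 : ⟪V (x + lam • (y - x) - z), x + lam • (y - x) - z⟫ =
      (1 - lam)^2 * ⟪V (x - y), x - y⟫ + 2 * (1 - lam) * ⟪V (x - y), y - z⟫ +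
      ⟪V (y - z), y - z⟫ := by
    rw [e2]
    generalize x - y = p at *
    generalize y - z = q at *
    simp only [map_add, map_smul, inner_add_left, inner_add_right, inner_smul_left,
      inner_smul_right, conj_trivial, e4]
    ring
  have e6 : ⟪V (x - z), x - z⟫ =
      ⟪V (x - y), x - y⟫ + 2 * ⟪V (x - y), y - z⟫ + ⟪V (y - z), y - z⟫ := by
    rw [e3]
    generalize x - y = p at *
    generalize y - z = q at *
    simp only [map_add, inner_add_left, inner_add_right, e4]
    ring
  rw [e5, e6]
  have a3 := mul_le_mul_of_nonneg_left h8 hlam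
  have a4 : γ * ‖U‖ / (2 * β) = 2 * (γ * ‖U‖ / (4 * β)) := by field_simp; ring
  rw [a4]
  nlinarith

/-- perturbation -/
lemma hlp_pert (U V : H →L[ℝ] H) (hVU : ∀ z, V (U z) = z) (μ : ℝ) (hμ : 0 < μ)
    (hUle : ∀ w, ‖w‖^2 ≤ μ * ⟪V w, w⟫)
    (g : H → ℝ) (γ : ℝ) (hγ : 0 < γ) (P : H → H)
    (hP : ∀ y z : H, γ * g z ≥ γ * g (P y) + ⟪V (y - P y), z - P y⟫)
    (x c b : H) :
    ‖P (x - γ • U (c + b)) - P (x - γ • U c)‖ ≤ μ * γ * ‖b‖ := by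
  set u := x - γ • U (c + b) with hu
  set v := x - γ • U c with hv
  have h1 := hP u (P v)
  have h2 := hP v (P u)
  have e : V (u - P u) - V (v - P v) = -(γ • b) - V (P u - P v) := by
    simp only [hu, hv, map_sub, map_add, map_smul, hVU]
    module
  have a1 : ⟪V (u - P u), P v - P u⟫ = - ⟪V (u - P u), P u - P v⟫ := by
    rw [← inner_neg_right, neg_sub]
  have h3 : 0 ≤ ⟪V (u - P u) - V (v - P v), P u - P v⟫ := by
    rw [inner_sub_left]; linarith
  rw [e, inner_sub_left, inner_neg_left, inner_smul_left, conj_trivial] at h3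
  have h4 := hUle (P u - P v)
  have h5 : - ⟪b, P u - P v⟫ ≤ ‖b‖ * ‖P u - P v‖ := by
    have := neg_le_of_abs_le (abs_real_inner_le_norm b (P u - P v)); linarith
  have h6 := mul_le_mul_of_nonneg_left h5 hγ.le
  have h7 : ‖P u - P v‖^2 ≤ μ * γ * ‖b‖ * ‖P u - P v‖ := by
    have : μ * ⟪V (P u - P v), P u - P v⟫ ≤ μ * (γ * (‖b‖ * ‖P u - P v‖)) := by
      gcongr; linarith
    nlinarith
  by_contra hc
  push Not at hc
  have : 0 ≤ μ * γ * ‖b‖ := by positivity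
  nlinarith

lemma hlp_add (V : H →L[ℝ] H) (hV : ∀ x y, ⟪V x, y⟫ = ⟪x, V y⟫) (h0 : ∀ w, 0 ≤ ⟪V w, w⟫)
    (C : ℝ) (h1 : ∀ w, ⟪V w, w⟫ ≤ C * ‖w‖^2) (hC : 0 < C) (u e : H) (ε : ℝ) (he : ‖e‖ ≤ ε) :
    ⟪V (u + e), u + e⟫ ≤ (1 + ε) * ⟪V u, u⟫ + C * (ε + ε^2) := by
  have e4 : ⟪V e, u⟫ = ⟪V u, e⟫ := by rw [hV, real_inner_comm]
  have hε : 0 ≤ ε := (norm_nonneg e).trans he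
  have hve : ⟪V e, e⟫ ≤ C * ε^2 := (h1 e).trans (by gcongr)
  have : 2 * ⟪V u, e⟫ ≤ ε * ⟪V u, u⟫ + C * ε := by
    rcases hε.eq_or_lt with h | h
    · rw [← h] at he
      have : e = 0 := norm_le_zero_iff.1 he
      simp [this, ← h]
    · have := h0 (ε • u - e)
      simp only [map_sub, map_smul, inner_sub_left, inner_sub_right, inner_smul_left,
        inner_smul_right, conj_trivial, e4] at this
      have h2 : ε * (2 * ⟪V u, e⟫) ≤ ε * (ε * ⟪V u, u⟫ + C * ε) := by nlinarith
      exact le_of_mul_le_mul_left h2 h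
  simp only [map_add, inner_add_left, inner_add_right, e4]
  linarith

lemma hlp_weak_cpt (x : ℕ → H) (M : ℝ) (hM : ∀ k, ‖x k‖ ≤ M) (F : Ultrafilter ℕ) :
    ∃ p : H, ∀ y, Tendsto (fun k => ⟪x k, y⟫) F (nhds ⟪p, y⟫) := by
  let X : ℕ → WeakDual ℝ H := fun k => StrongDual.toWeakDual (InnerProductSpace.toDual ℝ H (x k))
  have hc := WeakDual.isCompact_closedBall (𝕜 := ℝ) (E := H) 0 M
  obtain ⟨φ, -, hφ⟩ := hc.ultrafilter_le_nhds (F.map X) (by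
    rw [le_principal_iff]
    show X ⁻¹' _ ∈ F
    refine Filter.Eventually.of_forall (f := (F : Filter ℕ)) (fun k => ?_)
    simp [X, hM k])
  refine ⟨(InnerProductSpace.toDual ℝ H).symm (WeakDual.toStrongDual φ), fun y => ?_⟩
  have h : Tendsto X F (nhds φ) := hφ
  have := ((WeakDual.eval_continuous y).tendsto φ).comp h
  rw [InnerProductSpace.toDual_symm_apply]
  exact this

lemma hlp_weak_lsc (h : H → ℝ) (hc : ConvexOn ℝ Set.univ h) (hl : LowerSemicontinuous h)
    (F : Filter ℕ) [F.NeBot] (y : ℕ → H) (p : H)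
    (hy : ∀ w, Tendsto (fun k => ⟪y k, w⟫) F (nhds ⟪p, w⟫)) (c : ℝ)
    (hev : ∀ᶠ k in F, h (y k) ≤ c) : h p ≤ c := by
  by_contra hcon
  have h1 : Convex ℝ {z | h z ≤ c} := by simpa using hc.convex_le c
  have h2 : IsClosed {z | h z ≤ c} := hl.isClosed_preimage c
  obtain ⟨φ, s, hs, hps⟩ := geometric_hahn_banach_closed_point h1 h2 hcon
  have hφ : ∀ z, φ z = ⟪z, (InnerProductSpace.toDual ℝ H).symm φ⟫ := by
    intro z; rw [real_inner_comm, InnerProductSpace.toDual_symm_apply]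
  have h3 := hy ((InnerProductSpace.toDual ℝ H).symm φ)
  have h4 := le_of_tendsto h3 (b := s) (by
    filter_upwards [hev] with k hk
    rw [← hφ]; exact (hs _ hk).le)
  rw [← hφ] at h4
  linarith

end helpers2

/-- weak convergence of the variable metric forward-backward (proximal
gradient) algorithm for minimizing `f + g`, `f` convex differentiable with
`(1/β)`-Lipschitz gradient, `g` convex lower semicontinuous. -/
theorem variable_metric_proximal_gradient_weak_convergence
    {H : Type*} [NormedAddCommGroup H] [InnerProductSpace ℝ H] [CompleteSpace H]
    (β : ℝ) (hβ : 0 < β)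
    (f : H → ℝ) (f' : H → H)
    (hfconv : ConvexOn ℝ Set.univ f)
    (hfgrad : ∀ z : H, HasGradientAt f (f' z) z)
    (hflip : ∀ z w : H, ‖f' z - f' w‖ ≤ (1 / β) * ‖z - w‖)
    (g : H → ℝ)
    (hgconv : ConvexOn ℝ Set.univ g)
    (hglsc : LowerSemicontinuous g)
    (hΩ : {z : H | ∀ y : H, f z + g z ≤ f y + g y}.Nonempty)
    (α : ℝ) (hα : 0 < α) (μ : ℝ) (hμ : 0 < μ)
    (U V : ℕ → H →L[ℝ] H)
    (hU : ∀ k, IsSelfAdjoint (U k))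
    (hUpos : ∀ k, ∀ z : H, ⟪U k z, z⟫ ≥ α * ‖z‖ ^ 2)
    (hV : ∀ k, IsSelfAdjoint (V k))
    (hVU : ∀ k, (V k).comp (U k) = ContinuousLinearMap.id ℝ H)
    (hUV : ∀ k, (U k).comp (V k) = ContinuousLinearMap.id ℝ H)
    (hUnorm : ∀ k, ‖U k‖ ≤ μ)
    (η : ℕ → ℝ) (hη0 : ∀ k, 0 ≤ η k) (hηsum : Summable η)
    (hUmono : ∀ k, ∀ z : H, (1 + η k) * ⟪U (k + 1) z, z⟫ ≥ ⟪U k z, z⟫)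
    (γ lam αk : ℕ → ℝ)
    (hγ : ∀ k, 0 < γ k ∧ γ k < 2 * β / ‖U k‖)
    (hαk : ∀ k, αk k = 2 * β / (4 * β - γ k * ‖U k‖))
    (hlam : ∀ k, 0 < lam k ∧ lam k < 1 / αk k)
    (lamlb τ γlb : ℝ) (hlamlb : 0 < lamlb) (hτ : 0 < τ) (hγlb : 0 < γlb)
    (hlam' : ∀ k, lamlb ≤ lam k ∧ lam k ≤ 1 / αk k - τ)
    (hγ' : ∀ k, γlb ≤ γ k)
    (a b : ℕ → H)
    (ha : Summable (fun k => lam k * ‖a k‖))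
    (hb : Summable (fun k => lam k * ‖b k‖))
    (P : ℕ → H → H)
    (hP : ∀ k, ∀ y z : H,
      γ k * g z ≥ γ k * g (P k y) + ⟪V k (y - P k y), z - P k y⟫)
    (x : ℕ → H)
    (hx : ∀ k, x (k + 1) =
      x k + lam k • (P k (x k - γ k • U k (f' (x k) + b k)) + a k - x k)) :
    ∃ p ∈ {z : H | ∀ y : H, f z + g z ≤ f y + g y},
      ∀ y : H, Tendsto (fun k => ⟪x k, y⟫) atTop (nhds ⟪p, y⟫) := by
  have hUs : ∀ k x y, ⟪U k x, y⟫ = ⟪x, U k y⟫ := fun k => (hU k).isSymmetric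
  have hVs : ∀ k x y, ⟪V k x, y⟫ = ⟪x, V k y⟫ := fun k => (hV k).isSymmetric
  have hVU' : ∀ k z, V k (U k z) = z := fun k z => DFunLike.congr_fun (hVU k) z
  have hUV' : ∀ k z, U k (V k z) = z := fun k z => DFunLike.congr_fun (hUV k) z
  have hN : ∀ k, 0 < ‖U k‖ := by
    intro k
    rcases (norm_nonneg (U k)).eq_or_lt with h | h
    · have := hγ k
      rw [← h, div_zero] at this
      linarith
    · exact h
  have hγU : ∀ k, γ k * ‖U k‖ < 2 * β := fun k => (lt_div_iff₀ (hN k)).1 (hγ k).2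
  have hαU : ∀ k, α ≤ ‖U k‖ := by
    intro k
    have : ∃ z : H, z ≠ 0 := by
      by_contra hcon
      push Not at hcon
      have h0 : U k = 0 := by ext z; rw [hcon z]; simp
      have := hN k
      rw [h0, norm_zero] at this
      exact lt_irrefl _ this
    obtain ⟨z, hz⟩ := this
    have h1 := hUpos k z
    have h2 : ⟪U k z, z⟫ ≤ ‖U k z‖ * ‖z‖ := real_inner_le_norm _ _
    have h3 : ‖U k z‖ * ‖z‖ ≤ (‖U k‖ * ‖z‖) * ‖z‖ := by gcongr; exact (U k).le_opNorm z
    have h4 : 0 < ‖z‖ ^ 2 := by positivity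
    have h5 : α * ‖z‖ ^ 2 ≤ ‖U k‖ * ‖z‖ ^ 2 := by nlinarith
    exact le_of_mul_le_mul_right h5 h4
  have hγle : ∀ k, γ k ≤ 2 * β / α := by
    intro k
    rw [le_div_iff₀ hα]
    have := mul_le_mul_of_nonneg_left (hαU k) (hγ k).1.le
    linarith [hγU k]
  have hinv : ∀ k, 1 / αk k = 2 - γ k * ‖U k‖ / (2 * β) := by
    intro k
    rw [hαk k, one_div_div]
    field_simp
    ring
  have hUle : ∀ k w, ‖w‖^2 ≤ ‖U k‖ * ⟪V k w, w⟫ := fun k =>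
    hlp_U_le (U k) (V k) (hUs k) α hα (hUpos k) (hN k) (hUV' k)
  have hVb := fun k => hlp_V (U k) (V k) α hα (hUpos k) (hUV' k)
  have hV0 : ∀ k w, 0 ≤ ⟪V k w, w⟫ := fun k w => (hVb k w).1
  have hV1 : ∀ k w, ⟪V k w, w⟫ ≤ (1/α) * ‖w‖^2 := fun k w => (hVb k w).2.1
  have hμle : ∀ k w, ‖w‖^2 ≤ μ * ⟪V k w, w⟫ := fun k w =>
    (hUle k w).trans (mul_le_mul_of_nonneg_right (hUnorm k) (hV0 k w))
  have hVm : ∀ k w, ⟪V (k+1) w, w⟫ ≤ (1 + η k) * ⟪V k w, w⟫ := fun k =>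
    hlp_V_mono (U k) (V k) (U (k+1)) (V (k+1)) (hUs k) (1 + η k) (by linarith [hη0 k])
      (fun z => le_trans (by positivity) (hUpos k z)) (hUmono k) (hUV' k) (hUV' (k+1))
  have hVlim := hlp_V_lim V hVs (1/α) (by positivity) hV0 hV1 η hη0 hηsum hVm
  have hBH := hlp_BH β hβ f f' hfconv hfgrad hflip
  set y : ℕ → H := fun k => P k (x k - γ k • U k (f' (x k))) with hy
  set ε : ℕ → ℝ := fun k => lam k * ‖a k‖ + (μ * (2 * β / α)) * (lam k * ‖b k‖) with hε
  have hεs : Summable ε := ha.add (hb.mul_left _)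
  have hε0 : ∀ k, 0 ≤ ε k := by
    intro k
    have := (hlam k).1
    simp only [hε]
    positivity
  have hstepx : ∀ k, ∃ e, x (k+1) = x k + lam k • (y k - x k) + e ∧ ‖e‖ ≤ ε k := by
    intro k
    refine ⟨lam k • (P k (x k - γ k • U k (f' (x k) + b k)) - y k + a k), ?_, ?_⟩
    · rw [hx k]; module
    · have h1 := hlp_pert (U k) (V k) (hVU' k) μ hμ (hμle k) g (γ k) (hγ k).1 (P k) (hP k)
        (x k) (f' (x k)) (b k)
      have hl := (hlam k).1
      rw [norm_smul, Real.norm_of_nonneg hl.le]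
      have h2 : μ * γ k * ‖b k‖ ≤ μ * (2 * β / α) * ‖b k‖ := by gcongr; exact hγle k
      calc _ ≤ lam k * (μ * (2 * β / α) * ‖b k‖ + ‖a k‖) := by
            gcongr
            exact (norm_add_le _ _).trans (by gcongr; exact h1.trans h2)
        _ = _ := by simp only [hε]; ring
  set s : ℕ → ℝ := fun k => η k + ε k + η k * ε k with hs
  set t : ℕ → ℝ := fun k => (1 + η k) * ((1/α) * (ε k + ε k ^ 2)) with ht
  have hs0 : ∀ k, 0 ≤ s k := fun k => by
    have := hη0 k
    have := hε0 k
    simp only [hs]; positivity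
  have ht0 : ∀ k, 0 ≤ t k := fun k => by
    have := hη0 k
    have := hε0 k
    simp only [ht]; positivity
  have hηle : ∀ k, η k ≤ ∑' j, η j := fun k => hηsum.le_tsum k (fun j _ => hη0 j)
  have hεle : ∀ k, ε k ≤ ∑' j, ε j := fun k => hεs.le_tsum k (fun j _ => hε0 j)
  have hss : Summable s := by
    refine (hηsum.add hεs).add (Summable.of_nonneg_of_le
      (fun k => mul_nonneg (hη0 k) (hε0 k))
      (fun k => mul_le_mul_of_nonneg_right (hηle k) (hε0 k)) (hεs.mul_left _))
  have hts : Summable t := by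
    refine Summable.of_nonneg_of_le ht0 (fun k => ?_)
      (hεs.mul_left ((1 + ∑' j, η j) * ((1/α) * (1 + ∑' j, ε j))))
    have h1 := hηle k
    have h2 := hεle k
    have h3 := hε0 k
    have h4 := hη0 k
    have : ε k + ε k ^ 2 = (1 + ε k) * ε k := by ring
    simp only [ht]
    rw [this]
    calc (1 + η k) * (1 / α * ((1 + ε k) * ε k))
        ≤ (1 + ∑' j, η j) * (1 / α * ((1 + ∑' j, ε j) * ε k)) := by
          gcongr
          linarith
      _ = _ := by ring
  -- quasi-Fejer
  have hfejer : ∀ z, (∀ w, f z + g z ≤ f w + g w) →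
      (∃ L, Tendsto (fun k => ⟪V k (x k - z), x k - z⟫) atTop (nhds L)) ∧
      Tendsto (fun k => lamlb * τ * ⟪V k (x k - y k), x k - y k⟫) atTop (nhds 0) := by
    intro z hz
    refine hlp_RS _ _ s t (fun k => hV0 k _) (fun k => mul_nonneg (by positivity) (hV0 k _))
      hs0 ht0 hss hts (fun k => ?_)
    obtain ⟨e, he, hen⟩ := hstepx k
    have h1 := hlp_step β hβ (U k) (V k) (hVs k) (hVU' k) (hUle k) f' hBH g (γ k) (lam k)
      (hγ k).1 (hlam k).1.le (P k) (hP k) z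
      (fun w => hlp_cvx_ineq f f' hfgrad g hgconv z w hz) (x k) (y k) rfl
    rw [← hinv k] at h1
    have h2 := hlp_add (V k) (hVs k) (hV0 k) (1/α) (hV1 k) (by positivity)
      (x k + lam k • (y k - x k) - z) e (ε k) hen
    have h3 := hVm k (x (k+1) - z)
    have e1 : x (k+1) - z = x k + lam k • (y k - x k) - z + e := by rw [he]; abel
    rw [← e1] at h2
    have h4 : lamlb * τ ≤ lam k * (1 / αk k - lam k) := by
      apply mul_le_mul (hlam' k).1 _ hτ.le (hlam k).1.le
      linarith [(hlam' k).2]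
    have hB := hV0 k (x k - y k)
    have h5 := mul_le_mul_of_nonneg_right h4 hB
    have hcB : 0 ≤ lamlb * τ * ⟪V k (x k - y k), x k - y k⟫ := mul_nonneg (by positivity) hB
    have hη := hη0 k
    have hεk := hε0 k
    generalize ⟪V k (x k - y k), x k - y k⟫ = B at *
    generalize ⟪V k (x k - z), x k - z⟫ = A at *
    generalize ⟪V (k+1) (x (k+1) - z), x (k+1) - z⟫ = A' at *
    generalize ⟪V k (x (k+1) - z), x (k+1) - z⟫ = A'' at *
    generalize ⟪V k (x k + lam k • (y k - x k) - z), x k + lam k • (y k - x k) - z⟫ = D at *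
    have h6 : D ≤ A - lamlb * τ * B := by linarith
    have h7 : A' ≤ (1 + η k) * ((1 + ε k) * (A - lamlb * τ * B) + 1 / α * (ε k + ε k ^ 2)) := by
      refine h3.trans ?_
      gcongr
      refine h2.trans ?_
      gcongr
    have h8 : 0 ≤ s k * (lamlb * τ * B) := mul_nonneg (hs0 k) hcB
    simp only [hs] at h8
    simp only [hs, ht]
    linarith
  obtain ⟨z0, hz0⟩ := hΩ
  have hz0' : ∀ w, f z0 + g z0 ≤ f w + g w := hz0
  obtain ⟨⟨L0, hL0⟩, hB0⟩ := hfejer z0 hz0'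
  obtain ⟨M, hM⟩ : ∃ M, ∀ k, ‖x k‖ ≤ M := by
    obtain ⟨K, hK⟩ := hL0.bddAbove_range
    refine ⟨‖z0‖ + (μ * K + 1), fun k => ?_⟩
    have h1 := hμle k (x k - z0)
    have h2 : ⟪V k (x k - z0), x k - z0⟫ ≤ K := hK ⟨k, rfl⟩
    have h3 : μ * ⟪V k (x k - z0), x k - z0⟫ ≤ μ * K := by gcongr
    have h4 : ‖x k‖ ≤ ‖z0‖ + ‖x k - z0‖ := by
      have := norm_add_le z0 (x k - z0)
      rwa [add_sub_cancel] at this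
    nlinarith [sq_nonneg (‖x k - z0‖ - 1)]
  have hr : Tendsto (fun k => ‖x k - y k‖) atTop (nhds 0) := by
    have h1 : Tendsto (fun k => ‖x k - y k‖^2) atTop (nhds 0) := by
      have h2 := hB0.const_mul (μ / (lamlb * τ))
      rw [mul_zero] at h2
      refine squeeze_zero (fun k => by positivity) (fun k => (hμle k _).trans (le_of_eq ?_)) h2
      field_simp
    have h3 := h1.sqrt
    simpa using h3
  have hclus : ∀ (F : Ultrafilter ℕ), (F : Filter ℕ) ≤ atTop → ∀ p : H,
      (∀ w, Tendsto (fun k => ⟪x k, w⟫) F (nhds ⟪p, w⟫)) → ∀ w, f p + g p ≤ f w + g w := by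
    intro F hF p hp z
    have hfc : Continuous f := continuous_iff_continuousAt.2 (fun w =>
      (hfgrad w).differentiableAt.continuousAt)
    have hyw : ∀ w, Tendsto (fun k => ⟪y k, w⟫) F (nhds ⟪p, w⟫) := by
      intro w
      have h1 : Tendsto (fun k => ⟪x k - y k, w⟫) F (nhds 0) := by
        have h2 := (hr.mono_left hF).mul_const ‖w‖
        rw [zero_mul] at h2
        exact squeeze_zero_norm (fun k => norm_inner_le_norm _ _) h2
      have h3 := (hp w).sub h1
      rw [sub_zero] at h3
      refine h3.congr (fun k => ?_)
      rw [inner_sub_left]; ring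
    have hbound : ∀ k, f (y k) + g (y k) ≤ f z + g z + ((1/γlb) * ((1/α) * ‖x k - y k‖ *
        (‖z‖ + M + ‖x k - y k‖)) + (1/β) * ‖x k - y k‖ ^ 2) := by
      intro k
      have h1 := hP k (x k - γ k • U k (f' (x k))) z
      change _ ≥ γ k * g (y k) + ⟪V k (x k - γ k • U k (f' (x k)) - y k), z - y k⟫ at h1
      have e1 : V k (x k - γ k • U k (f' (x k)) - y k) = V k (x k - y k) - γ k • f' (x k) := by
        simp only [map_sub, map_smul, hVU']; abel
      rw [e1, inner_sub_left, inner_smul_left, conj_trivial] at h1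
      have h2 := hlp_grad_ineq f f' hfconv hfgrad (y k) (x k)
      have h3 := hlp_grad_ineq f f' hfconv hfgrad (x k) z
      have hg0 := (hγ k).1
      have h4 : -⟪V k (x k - y k), z - y k⟫ ≤
          (1/α) * ‖x k - y k‖ * (‖z‖ + M + ‖x k - y k‖) := by
        have b1 := neg_le_of_abs_le (abs_real_inner_le_norm (V k (x k - y k)) (z - y k))
        have b2 := (hVb k (x k - y k)).2.2
        have b3 : ‖z - y k‖ ≤ ‖z‖ + M + ‖x k - y k‖ := by
          have : z - y k = z - x k + (x k - y k) := by abel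
          rw [this]
          have c1 := norm_add_le (z - x k) (x k - y k)
          have c2 := norm_sub_le z (x k)
          linarith [hM k]
        have b4 : ‖V k (x k - y k)‖ * ‖z - y k‖ ≤
          (1/α) * ‖x k - y k‖ * (‖z‖ + M + ‖x k - y k‖) := by gcongr
        linarith
      have hM0 : 0 ≤ M := (norm_nonneg _).trans (hM 0)
      have h5 : g (y k) ≤ g z + (1/γlb) * ((1/α) * ‖x k - y k‖ * (‖z‖ + M + ‖x k - y k‖))
          + ⟪f' (x k), z - y k⟫ := by
        set R := (1/α) * ‖x k - y k‖ * (‖z‖ + M + ‖x k - y k‖) with hR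
        have hR0 : 0 ≤ R := by positivity
        have c1 : γ k * g (y k) ≤ γ k * (g z + (1/γ k) * R + ⟪f' (x k), z - y k⟫) := by
          have : γ k * (g z + (1/γ k) * R + ⟪f' (x k), z - y k⟫) =
            γ k * g z + R + γ k * ⟪f' (x k), z - y k⟫ := by field_simp
          rw [this]; linarith
        have c2 := le_of_mul_le_mul_left c1 hg0
        have c3 : (1/γ k) * R ≤ (1/γlb) * R := by gcongr; exact hγ' k
        linarith
      have h6 : ⟪f' (x k) - f' (y k), x k - y k⟫ ≤ (1/β) * ‖x k - y k‖^2 := by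
        calc _ ≤ ‖f' (x k) - f' (y k)‖ * ‖x k - y k‖ := real_inner_le_norm _ _
          _ ≤ (1/β * ‖x k - y k‖) * ‖x k - y k‖ := by gcongr; exact hflip _ _
          _ = _ := by ring
      have h7 : ⟪f' (x k), z - y k⟫ - ⟪f' (x k), z - x k⟫ = ⟪f' (x k), x k - y k⟫ := by
        rw [← inner_sub_right]; congr 1; abel
      rw [inner_sub_left] at h6
      linarith
    refine le_of_forall_pos_le_add (fun δ hδ => ?_)
    refine hlp_weak_lsc (fun w => f w + g w) (hfconv.add hgconv)
      (hfc.lowerSemicontinuous.add hglsc) F y p hyw (f z + g z + δ) ?_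
    have hlim : Tendsto (fun k => (1/γlb) * ((1/α) * ‖x k - y k‖ *
        (‖z‖ + M + ‖x k - y k‖)) + (1/β) * ‖x k - y k‖ ^ 2) atTop (nhds 0) := by
      have := (((hr.const_mul (1/α)).mul (hr.const_add (‖z‖ + M))).const_mul (1/γlb)).add
        ((hr.pow 2).const_mul (1/β))
      simpa using this
    filter_upwards [hF (hlim.eventually (gt_mem_nhds hδ))] with k hk
    have h1 := hbound k
    have h2 : _ < δ := hk
    linarith
  have huniq : ∀ (F G : Ultrafilter ℕ), (F : Filter ℕ) ≤ atTop → (G : Filter ℕ) ≤ atTop →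
      ∀ p q : H, (∀ w, Tendsto (fun k => ⟪x k, w⟫) F (nhds ⟪p, w⟫)) →
      (∀ w, Tendsto (fun k => ⟪x k, w⟫) G (nhds ⟪q, w⟫)) → p = q := by
    intro F G hF hG p q hp hq
    obtain ⟨⟨Lp, hLp⟩, -⟩ := hfejer p (hclus F hF p hp)
    obtain ⟨⟨Lq, hLq⟩, -⟩ := hfejer q (hclus G hG q hq)
    obtain ⟨lp, hlp⟩ := hVlim p
    obtain ⟨lq, hlq⟩ := hVlim q
    obtain ⟨l, hl⟩ := hVlim (p - q)
    have hconv : ∃ c, Tendsto (fun k => ⟪x k, V k (p - q)⟫) atTop (nhds c) := by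
      have h1 := (((hlp.inner tendsto_const_nhds (y := p)).sub
        (hlq.inner tendsto_const_nhds (y := q))).sub (hLp.sub hLq)).const_mul (1/2)
      refine ⟨_, h1.congr (fun k => ?_)⟩
      have a1 := hVs k (x k) p
      have a2 := hVs k (x k) q
      have a3 : ⟪V k p, x k⟫ = ⟪x k, V k p⟫ := real_inner_comm _ _
      have a4 : ⟪V k q, x k⟫ = ⟪x k, V k q⟫ := real_inner_comm _ _
      simp only [map_sub, inner_sub_left, inner_sub_right, a1, a2, a3, a4]
      ring
    obtain ⟨c, hc⟩ := hconv
    have hlimF : ∀ (F : Ultrafilter ℕ), (F : Filter ℕ) ≤ atTop → ∀ r : H,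
        (∀ w, Tendsto (fun k => ⟪x k, w⟫) F (nhds ⟪r, w⟫)) → ⟪r, l⟫ = c := by
      intro F hF r hp
      have h2 : Tendsto (fun k => ⟪x k, l⟫) atTop (nhds c) := by
        have h3 : Tendsto (fun k => ⟪x k, V k (p - q) - l⟫) atTop (nhds 0) := by
          have h4 := (tendsto_iff_norm_sub_tendsto_zero.1 hl).const_mul M
          rw [mul_zero] at h4
          refine squeeze_zero_norm (fun k => (norm_inner_le_norm _ _).trans ?_) h4
          gcongr
          exact hM k
        have h5 := hc.sub h3
        rw [sub_zero] at h5
        refine h5.congr (fun k => ?_)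
        rw [inner_sub_right]; ring
      exact tendsto_nhds_unique (hp l) (h2.mono_left hF)
    have h1 := hlimF F hF p hp
    have h2 := hlimF G hG q hq
    have h3 : ⟪l, p - q⟫ = 0 := by
      rw [real_inner_comm, inner_sub_left, h1, h2, sub_self]
    have h4 := (hl.inner (tendsto_const_nhds (x := p - q))).const_mul μ
    have h5 := ge_of_tendsto' h4 (fun k => hμle k (p - q))
    rw [h3, mul_zero] at h5
    have h6 : ‖p - q‖ = 0 := by
      have := norm_nonneg (p - q)
      nlinarith
    exact sub_eq_zero.1 (norm_eq_zero.1 h6)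
  have hF0 : ((Ultrafilter.of atTop : Ultrafilter ℕ) : Filter ℕ) ≤ atTop := Ultrafilter.of_le _
  obtain ⟨p, hp⟩ := hlp_weak_cpt x M hM (Ultrafilter.of atTop)
  refine ⟨p, hclus _ hF0 p hp, fun w => ?_⟩
  rw [tendsto_iff_ultrafilter]
  intro G hG
  obtain ⟨q, hq⟩ := hlp_weak_cpt x M hM G
  rw [huniq _ G hF0 hG p q hp hq]
  exact hq w
end

section
/- Let H be a real Hilbert space, let C ⊆ H be a nonempty closed convex set, and let B : H → H be β-cocoercive for some β > 0. Suppose the solution set Ω := {x* ∈ C | ∀ y ∈ C, ⟨B x*, y − x*⟩ ≥ 0} of the variational inequality problem is nonempty. Assume the variable-metric hypotheses of the context: operators U_k, V_k with ⟨U_k x, x⟩ ≥ α‖x‖² (α > 0), V_k∘U_k = U_k∘V_k = id, ‖U_k‖ ≤ μ, (1 + η_k)⟨U_{k+1}x, x⟩ ≥ ⟨U_k x, x⟩ with η_k ≥ 0 summable; parameters γ_k ∈ (0, 2β/‖U_k‖), α_k := 2β/(4β − γ_k‖U_k‖), λ_k with λ̲ ≤ λ_k ≤ 1/α_k − τ (λ̲,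 τ > 0) and γ_k ≥ γ̲ > 0; errors a_k, b_k with ∑_k λ_k‖a_k‖ < ∞, ∑_k λ_k‖b_k‖ < ∞; and projection maps P_k : H → H satisfying, for every y ∈ H, P_k y ∈ C and ⟨V_k(y − P_k y), z − P_k y⟩ ≤ 0 for all z ∈ C. Define from x_0 ∈ H the iteration x_{k+1} = x_k + λ_k·(P_k(x_k − γ_k·U_k(B x_k + b_k)) + a_k − x_k). Then there exists p ∈ Ω such that x_k converges weakly to p, i.e., ⟨x_k, y⟩ → ⟨p, y⟩ for every y ∈ H. -/
open RealInnerProductSpace Filter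

theorem aux_summable_mul (f g : ℕ → ℝ) (hf0 : ∀ k, 0 ≤ f k) (hg0 : ∀ k, 0 ≤ g k)
    (hf : Summable f) (hg : Summable g) : Summable (fun k => f k * g k) := by
  refine Summable.of_nonneg_of_le (fun k => mul_nonneg (hf0 k) (hg0 k)) (fun k => ?_)
    (hf.mul_right (∑' i, g i))
  exact mul_le_mul_of_nonneg_left (hg.le_tsum k (fun j _ => hg0 j)) (hf0 k)

theorem aux_prod (η : ℕ → ℝ) (hη0 : ∀ k, 0 ≤ η k) (hη : Summable η) :
    ∃ (Q : ℕ → ℝ) (M : ℝ), (∀ k, 1 ≤ Q k) ∧ (∀ k, Q k ≤ M) ∧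
      (∀ k, Q (k + 1) = Q k * (1 + η k)) ∧ Tendsto Q atTop (nhds M) := by
  have h1 : ∀ k, (1 : ℝ) ≤ ∏ i ∈ Finset.range k, (1 + η i) := by
    intro k
    induction k with
    | zero => simp
    | succ k ih => rw [Finset.prod_range_succ]; nlinarith [hη0 k]
  have hmono : Monotone (fun k => ∏ i ∈ Finset.range k, (1 + η i)) := by
    refine monotone_nat_of_le_succ (fun k => ?_)
    rw [Finset.prod_range_succ]; nlinarith [hη0 k, h1 k]
  have hbd : BddAbove (Set.range (fun k => ∏ i ∈ Finset.range k, (1 + η i))) := by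
    refine ⟨Real.exp (∑' i, η i), ?_⟩
    rintro _ ⟨k, rfl⟩
    calc ∏ i ∈ Finset.range k, (1 + η i) ≤ ∏ i ∈ Finset.range k, Real.exp (η i) := by
          refine Finset.prod_le_prod (fun i _ => by linarith [hη0 i]) (fun i _ => ?_)
          linarith [Real.add_one_le_exp (η i)]
      _ = Real.exp (∑ i ∈ Finset.range k, η i) := (Real.exp_sum _ _).symm
      _ ≤ _ := Real.exp_le_exp.2 (hη.sum_le_tsum _ (fun i _ => hη0 i))
  refine ⟨_, _, h1, fun k => le_ciSup hbd k, fun k => Finset.prod_range_succ _ _,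
    tendsto_atTop_ciSup hmono hbd⟩

theorem aux_rs (u η d δ : ℕ → ℝ) (hu : ∀ k, 0 ≤ u k) (hη0 : ∀ k, 0 ≤ η k) (hη : Summable η)
    (hd : ∀ k, 0 ≤ d k) (hδ0 : ∀ k, 0 ≤ δ k) (hδ : Summable δ)
    (h : ∀ k, u (k + 1) ≤ (1 + η k) * u k - d k + δ k) :
    (∃ l, Tendsto u atTop (nhds l)) ∧ Summable d := by
  obtain ⟨Q, M, hQ1, hQM, hQs, hQt⟩ := aux_prod η hη0 hη
  have hM : 0 < M := by linarith [hQ1 0, hQM 0]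
  have hQ0 : ∀ k, 0 < Q k := fun k => by linarith [hQ1 k]
  have step : ∀ k, u (k + 1) / Q (k + 1) ≤ u k / Q k - d k / M + δ k := by
    intro k
    have e1 : u (k + 1) / Q (k + 1) ≤ ((1 + η k) * u k - d k + δ k) / Q (k + 1) :=
      div_le_div_of_nonneg_right (h k) (hQ0 _).le
    have e2 : ((1 + η k) * u k) / Q (k + 1) = u k / Q k := by
      rw [hQs]; have := hQ0 k; have := hη0 k
      field_simp
    have e3 : d k / M ≤ d k / Q (k + 1) :=
      div_le_div_of_nonneg_left (hd k) (hQ0 _) (hQM _)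
    have e4 : δ k / Q (k + 1) ≤ δ k := div_le_self (hδ0 k) (hQ1 _)
    rw [add_div, sub_div, e2] at e1
    linarith
  have hanti : Antitone (fun k => u k / Q k - ∑ i ∈ Finset.range k, δ i) := by
    refine antitone_nat_of_succ_le (fun k => ?_)
    rw [Finset.sum_range_succ]
    have := step k
    have : 0 ≤ d k / M := div_nonneg (hd k) hM.le
    linarith
  have hbd : BddBelow (Set.range (fun k => u k / Q k - ∑ i ∈ Finset.range k, δ i)) := by
    refine ⟨-∑' i, δ i, ?_⟩
    rintro _ ⟨k, rfl⟩
    have h1 := hδ.sum_le_tsum (Finset.range k) (fun i _ => hδ0 i)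
    have h2 : 0 ≤ u k / Q k := div_nonneg (hu k) (hQ0 k).le
    simp only
    linarith
  constructor
  · have t1 := tendsto_atTop_ciInf hanti hbd
    have t2 := (t1.add hδ.hasSum.tendsto_sum_nat).mul hQt
    refine ⟨_, t2.congr (fun k => ?_)⟩
    have := (hQ0 k).ne'
    field_simp
    ring
  · have key : ∀ k, u k / Q k + (∑ i ∈ Finset.range k, d i) / M
        ≤ u 0 / Q 0 + ∑ i ∈ Finset.range k, δ i := by
      intro k
      induction k with
      | zero => simp
      | succ k ih =>
        rw [Finset.sum_range_succ, Finset.sum_range_succ, add_div]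
        linarith [step k]
    refine summable_of_sum_range_le (c := (u 0 / Q 0 + ∑' i, δ i) * M) hd (fun k => ?_)
    have h1 := hδ.sum_le_tsum (Finset.range k) (fun i _ => hδ0 i)
    have h2 : 0 ≤ u k / Q k := div_nonneg (hu k) (hQ0 k).le
    rw [← div_le_iff₀ hM]
    linarith [key k]

section
variable {H : Type*} [NormedAddCommGroup H] [InnerProductSpace ℝ H]

theorem aux_pos (S : H →L[ℝ] H) (hS : ∀ x y, ⟪S x, y⟫ = ⟪x, S y⟫) (M : ℝ) (hM : 0 < M)
    (h0 : ∀ x, 0 ≤ ⟪S x, x⟫) (h1 : ∀ x, ⟪S x, x⟫ ≤ M * ‖x‖ ^ 2) (x : H) :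
    ‖S x‖ ^ 2 ≤ M * ⟪S x, x⟫ := by
  have h := h0 (x - M⁻¹ • S x)
  have h2 := h1 (S x)
  have e : ⟪S (x - M⁻¹ • S x), x - M⁻¹ • S x⟫
      = ⟪S x, x⟫ - 2 * M⁻¹ * ‖S x‖ ^ 2 + M⁻¹ ^ 2 * ⟪S (S x), S x⟫ := by
    simp only [map_sub, map_smul, inner_sub_left, inner_sub_right, real_inner_smul_left,
      real_inner_smul_right, hS (S x) x, real_inner_self_eq_norm_sq]
    ring
  have h3 : M⁻¹ ^ 2 * ⟪S (S x), S x⟫ ≤ M⁻¹ * ‖S x‖ ^ 2 := by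
    calc _ ≤ M⁻¹ ^ 2 * (M * ‖S x‖ ^ 2) := by gcongr
      _ = _ := by field_simp
  have h4 : M⁻¹ * ‖S x‖ ^ 2 ≤ ⟪S x, x⟫ := by rw [e] at h; linarith
  rwa [inv_mul_le_iff₀ hM] at h4

theorem aux_vlow (U V : H →L[ℝ] H) (hU : ∀ x y, ⟪U x, y⟫ = ⟪x, U y⟫)
    (hUV : ∀ x, U (V x) = x) (hU0 : ∀ x, 0 ≤ ⟪U x, x⟫) (M : ℝ) (hM : 0 < M)
    (hn : ‖U‖ ≤ M) (x : H) : ‖x‖ ^ 2 ≤ M * ⟪V x, x⟫ := by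
  have := aux_pos U hU M hM hU0 (fun y => ?_) (V x)
  · rwa [hUV, real_inner_comm] at this
  · calc ⟪U y, y⟫ ≤ ‖U y‖ * ‖y‖ := real_inner_le_norm _ _
      _ ≤ (M * ‖y‖) * ‖y‖ := by
        gcongr; exact U.le_of_opNorm_le hn y
      _ = _ := by ring

theorem aux_vhigh (U V : H →L[ℝ] H) (hUV : ∀ x, U (V x) = x) (α : ℝ)
    (hUp : ∀ z, ⟪U z, z⟫ ≥ α * ‖z‖ ^ 2) (x : H) : α * ‖V x‖ ^ 2 ≤ ⟪V x, x⟫ := by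
  have := hUp (V x)
  rw [hUV, real_inner_comm] at this
  exact this

theorem aux_vnorm (U V : H →L[ℝ] H) (hUV : ∀ x, U (V x) = x) (α : ℝ) (hα : 0 < α)
    (hUp : ∀ z, ⟪U z, z⟫ ≥ α * ‖z‖ ^ 2) (x : H) : ‖V x‖ ≤ ‖x‖ / α := by
  have h1 := aux_vhigh U V hUV α hUp x
  have h2 := real_inner_le_norm (V x) x
  rw [le_div_iff₀ hα]
  by_cases h : ‖V x‖ = 0
  · rw [h]; simp
  · have hp : 0 < ‖V x‖ := lt_of_le_of_ne (norm_nonneg _) (Ne.symm h)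
    nlinarith

theorem aux_mono (U V U' V' : H →L[ℝ] H) (hU : ∀ x y, ⟪U x, y⟫ = ⟪x, U y⟫)
    (hUV : ∀ x, U (V x) = x) (hUV' : ∀ x, U' (V' x) = x) (hU0 : ∀ x, 0 ≤ ⟪U x, x⟫)
    (η : ℝ) (hη : 0 ≤ η) (hm : ∀ z, (1 + η) * ⟪U' z, z⟫ ≥ ⟪U z, z⟫) (x : H) :
    ⟪V' x, x⟫ ≤ (1 + η) * ⟪V x, x⟫ := by
  have h := hU0 ((1 + η) • V x - V' x)
  have h2 := hm (V' x)
  rw [hUV'] at h2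
  have e : ⟪U ((1 + η) • V x - V' x), (1 + η) • V x - V' x⟫
     = (1 + η) ^ 2 * ⟪V x, x⟫ - 2 * (1 + η) * ⟪V' x, x⟫ + ⟪U (V' x), V' x⟫ := by
    simp only [map_sub, map_smul, inner_sub_left, inner_sub_right, real_inner_smul_left,
      real_inner_smul_right, hU (V' x) (V x), hUV, real_inner_comm x]
    ring
  rw [e] at h
  rw [real_inner_comm (V' x) x] at h2
  have h3 : 0 ≤ (1 + η) * ((1 + η) * ⟪V x, x⟫ - ⟪V' x, x⟫) := by nlinarith
  have := nonneg_of_mul_nonneg_right h3 (by linarith)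
  linarith

/-- strong convergence of the metrics -/
theorem aux_strong [CompleteSpace H] (V : ℕ → H →L[ℝ] H)
    (hV : ∀ k x y, ⟪V k x, y⟫ = ⟪x, V k y⟫) (M : ℝ) (hM : 0 < M)
    (h0 : ∀ k x, 0 ≤ ⟪V k x, x⟫) (h1 : ∀ k x, ⟪V k x, x⟫ ≤ M * ‖x‖ ^ 2)
    (η : ℕ → ℝ) (hη0 : ∀ k, 0 ≤ η k) (hη : Summable η)
    (hm : ∀ k x, ⟪V (k + 1) x, x⟫ ≤ (1 + η k) * ⟪V k x, x⟫) (h : H) :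
    ∃ L, Tendsto (fun k => V k h) atTop (nhds L) := by
  obtain ⟨Q, M', hQ1, hQM, hQs, hQt⟩ := aux_prod η hη0 hη
  have hQ0 : ∀ k, 0 < Q k := fun k => by linarith [hQ1 k]
  have hanti : ∀ x, Antitone (fun k => (Q k)⁻¹ * ⟪V k x, x⟫) := by
    intro x
    refine antitone_nat_of_succ_le (fun k => ?_)
    have h2 := hm k x
    have : 0 < 1 + η k := by linarith [hη0 k]
    calc (Q (k + 1))⁻¹ * ⟪V (k + 1) x, x⟫ ≤ (Q (k + 1))⁻¹ * ((1 + η k) * ⟪V k x, x⟫) := by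
          have := hQ0 (k + 1)
          gcongr
      _ = _ := by rw [hQs]; have := hQ0 k; field_simp
  have hbd : ∀ x, BddBelow (Set.range (fun k => (Q k)⁻¹ * ⟪V k x, x⟫)) := by
    intro x
    refine ⟨0, ?_⟩
    rintro _ ⟨k, rfl⟩
    exact mul_nonneg (inv_nonneg.2 (hQ0 k).le) (h0 k x)
  have hc := (tendsto_atTop_ciInf (hanti h) (hbd h)).cauchySeq
  have key : ∀ m n, m ≤ n → ‖(Q m)⁻¹ • V m h - (Q n)⁻¹ • V n h‖ ^ 2
      ≤ M * ((Q m)⁻¹ * ⟪V m h, h⟫ - (Q n)⁻¹ * ⟪V n h, h⟫) := by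
    intro m n hmn
    have := aux_pos ((Q m)⁻¹ • V m - (Q n)⁻¹ • V n) ?_ M hM ?_ ?_ h
    · simpa [inner_sub_left, real_inner_smul_left] using this
    · intro x y
      simp [inner_sub_left, inner_sub_right, real_inner_smul_left, real_inner_smul_right, hV]
    · intro x
      have := hanti x hmn
      simp only [sub_apply, smul_apply, inner_sub_left,
        real_inner_smul_left]
      simp only at this
      linarith
    · intro x
      simp only [sub_apply, smul_apply, inner_sub_left,
        real_inner_smul_left]
      have a1 : 0 ≤ (Q n)⁻¹ * ⟪V n x, x⟫ := mul_nonneg (inv_nonneg.2 (hQ0 n).le) (h0 n x)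
      have a2 : (Q m)⁻¹ * ⟪V m x, x⟫ ≤ 1 * ⟪V m x, x⟫ :=
        mul_le_mul_of_nonneg_right (inv_le_one_of_one_le₀ (hQ1 m)) (h0 m x)
      linarith [h1 m x]
  have hcs : CauchySeq (fun k => (Q k)⁻¹ • V k h) := by
    rw [Metric.cauchySeq_iff'] at hc ⊢
    intro ε hε
    obtain ⟨N, hN⟩ := hc (ε ^ 2 / M) (by positivity)
    refine ⟨N, fun n hn => ?_⟩
    have h2 := hN n hn
    have h3 := key N n hn
    rw [dist_comm, dist_eq_norm]
    rw [dist_comm, Real.dist_eq] at h2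
    have h4 := lt_of_le_of_lt (le_abs_self _) h2
    rw [lt_div_iff₀ hM] at h4
    refine lt_of_pow_lt_pow_left₀ 2 hε.le ?_
    linarith
  obtain ⟨L, hL⟩ := cauchySeq_tendsto_of_complete hcs
  refine ⟨M' • L, (hQt.smul hL).congr (fun k => ?_)⟩
  rw [smul_smul, mul_inv_cancel₀ (hQ0 k).ne', one_smul]

theorem aux_weak_compact [CompleteSpace H] (x : ℕ → H) (R : ℝ) (hR : ∀ k, ‖x k‖ ≤ R)
    (F : Ultrafilter ℕ) : ∃ p : H, ∀ y, Tendsto (fun k => ⟪x k, y⟫) F (nhds ⟪p, y⟫) := by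
  have hK := WeakDual.isCompact_closedBall (𝕜 := ℝ) (E := H) 0 R
  let f : ℕ → WeakDual ℝ H := fun k => StrongDual.toWeakDual (InnerProductSpace.toDual ℝ H (x k))
  have hf : ∀ k, f k ∈ WeakDual.toStrongDual ⁻¹' Metric.closedBall (0 : StrongDual ℝ H) R := by
    intro k
    simp [f, hR k]
  obtain ⟨g, -, hg⟩ := hK.ultrafilter_le_nhds (F.map f) (by
    simp only [le_principal_iff]
    exact Filter.mem_map.2 (Filter.univ_mem' hf))
  refine ⟨(InnerProductSpace.toDual ℝ H).symm (WeakDual.toStrongDual g), fun y => ?_⟩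
  have h2 : Tendsto (fun k => f k y) F (nhds (g y)) :=
    ((WeakDual.eval_continuous y).tendsto g).comp hg
  rw [InnerProductSpace.toDual_symm_apply]
  exact h2


/-- exact step -/
theorem aux_step1 (C : Set H) (β : ℝ) (hβ : 0 < β) (B : H → H)
    (hB : ∀ x y : H, ⟪x - y, B x - B y⟫ ≥ β * ‖B x - B y‖ ^ 2)
    (U V : H →L[ℝ] H) (hV : ∀ x y, ⟪V x, y⟫ = ⟪x, V y⟫) (hVU : ∀ x, V (U x) = x)
    (hV0 : ∀ x, 0 ≤ ⟪V x, x⟫) (N : ℝ) (hlow : ∀ x, ‖x‖ ^ 2 ≤ N * ⟪V x, x⟫)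
    (γ lam τ : ℝ) (hγ : 0 < γ) (hlam0 : 0 ≤ lam) (hlam : lam ≤ 2 - γ * N / (2 * β) - τ)
    (y t z : H) (hz : z ∈ C) (ht : t ∈ C) (hzs : ∀ c ∈ C, ⟪B z, c - z⟫ ≥ 0)
    (hproj : ∀ c ∈ C, ⟪V (y - γ • U (B y) - t), c - t⟫ ≤ 0) :
    ⟪V (y - z + lam • (t - y)), y - z + lam • (t - y)⟫
      ≤ ⟪V (y - z), y - z⟫ - lam * τ * ⟪V (y - t), y - t⟫ := by
  have h1 := hproj z hz
  have h2 := hzs t ht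
  have h3 := hB y z
  have h4 := hlow (y - t)
  have hw0 : ⟪V (y - t), y - t⟫ * (γ * N / (2 * β)) ≥ γ / (2 * β) * ‖y - t‖ ^ 2 := by
    have : γ / (2 * β) * ‖y - t‖ ^ 2 ≤ γ / (2 * β) * (N * ⟪V (y - t), y - t⟫) := by gcongr
    calc _ = γ / (2 * β) * (N * ⟪V (y - t), y - t⟫) := by ring
      _ ≥ _ := this
  have hV1 : V (y - γ • U (B y) - t) = V (y - t) - γ • B y := by
    simp only [map_sub, map_smul, hVU]; abel
  rw [hV1] at h1
  set w := y - t with hw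
  set D := B y - B z with hD
  have hBy : B y = B z + D := by simp [hD]
  have hzt : z - t = w - (y - z) := by simp [hw]
  have htz : t - z = (y - z) - w := by simp [hw]
  have hty : t - y = - w := by simp [hw]
  rw [hBy, hzt] at h1
  rw [htz] at h2
  rw [hty]
  set v := y - z with hv
  have hc := hV v w
  rw [real_inner_comm] at hc
  have hamgm : ⟪D, w⟫ ≤ β * ‖D‖ ^ 2 + 1 / (4 * β) * ‖w‖ ^ 2 := by
    have a1 := real_inner_le_norm D w
    have a2 : 0 ≤ (1 / (4 * β)) * (2 * β * ‖D‖ - ‖w‖) ^ 2 := by positivity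
    have a3 : (1 / (4 * β)) * (2 * β * ‖D‖ - ‖w‖) ^ 2
       = β * ‖D‖ ^ 2 + 1 / (4 * β) * ‖w‖ ^ 2 - ‖D‖ * ‖w‖ := by field_simp; ring
    linarith
  simp only [map_add, map_smul, map_neg, inner_add_left, inner_add_right, inner_sub_left,
    inner_sub_right, real_inner_smul_left, real_inner_smul_right, inner_neg_left,
    inner_neg_right] at h1 h2 h3 ⊢
  have hvD : ⟪D, v⟫ = ⟪v, D⟫ := real_inner_comm _ _
  have e5 : ⟪V w, v⟫ ≥ ⟪V w, w⟫ + γ * (β * ‖D‖ ^ 2 - ⟪D, w⟫) := by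
    have : γ * (⟪B z, v⟫ - ⟪B z, w⟫) ≥ 0 := mul_nonneg hγ.le h2
    have : γ * (⟪v, D⟫ - β * ‖D‖ ^ 2) ≥ 0 := mul_nonneg hγ.le (by linarith)
    rw [← hvD] at this
    nlinarith
  have e6 : γ * (β * ‖D‖ ^ 2 - ⟪D, w⟫) ≥ - (1 / 2 * (⟪V w, w⟫ * (γ * N / (2 * β)))) := by
    have : γ * (β * ‖D‖ ^ 2 + 1 / (4 * β) * ‖w‖ ^ 2 - ⟪D, w⟫) ≥ 0 :=
      mul_nonneg hγ.le (by linarith)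
    have e : γ * (1 / (4 * β) * ‖w‖ ^ 2) = 1 / 2 * (γ / (2 * β) * ‖w‖ ^ 2) := by
      field_simp; ring
    nlinarith
  have hcc : ⟪V v, w⟫ = ⟪V w, v⟫ := by rw [hV v w, real_inner_comm]
  rw [hcc]
  have e7 : lam * (⟪V w, v⟫ - ⟪V w, w⟫ + 1 / 2 * (⟪V w, w⟫ * (γ * N / (2 * β)))) ≥ 0 :=
    mul_nonneg hlam0 (by linarith)
  have e8 : lam * ((2 - γ * N / (2 * β) - τ - lam) * ⟪V w, w⟫) ≥ 0 :=
    mul_nonneg hlam0 (mul_nonneg (by linarith) (hV0 w))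
  nlinarith

/-- perturbation -/
theorem aux_step2 (V : H →L[ℝ] H) (hV : ∀ x y, ⟪V x, y⟫ = ⟪x, V y⟫) (α : ℝ) (hα : 0 < α)
    (hhigh : ∀ x, α * ‖V x‖ ^ 2 ≤ ⟪V x, x⟫) (hnorm : ∀ x, ‖V x‖ ≤ ‖x‖ / α)
    (A e : H) (K ε : ℝ) (hε : 0 ≤ ε) (he : ‖e‖ ≤ K * ε) :
    ⟪V (A + e), A + e⟫ ≤ (1 + ε / α) * ⟪V A, A⟫ + (K ^ 2 * ε + K ^ 2 / α * (ε * ε)) := by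
  have e1 : ⟪V (A + e), A + e⟫ = ⟪V A, A⟫ + 2 * ⟪V A, e⟫ + ⟪V e, e⟫ := by
    have : ⟪V e, A⟫ = ⟪V A, e⟫ := by rw [hV e A, real_inner_comm]
    simp only [map_add, inner_add_left, inner_add_right, this]; ring
  have e2 : ⟪V e, e⟫ ≤ K ^ 2 / α * (ε * ε) := by
    calc ⟪V e, e⟫ ≤ ‖V e‖ * ‖e‖ := real_inner_le_norm _ _
      _ ≤ (‖e‖ / α) * ‖e‖ := by gcongr; exact hnorm e
      _ ≤ ((K * ε) / α) * (K * ε) := by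
        have := (norm_nonneg e).trans he
        gcongr
      _ = _ := by ring
  have e3 : 2 * ⟪V A, e⟫ ≤ ε / α * ⟪V A, A⟫ + K ^ 2 * ε := by
    have h1 : ⟪V A, e⟫ ≤ ‖V A‖ * (K * ε) :=
      (real_inner_le_norm _ _).trans (by gcongr)
    have h2 : ‖V A‖ ^ 2 ≤ ⟪V A, A⟫ / α := by
      rw [le_div_iff₀ hα]; linarith [hhigh A]
    have h3 : ε * ‖V A‖ ^ 2 ≤ ε * (⟪V A, A⟫ / α) := by gcongr
    have h4 : 0 ≤ ε * (‖V A‖ - K) ^ 2 := by positivity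
    have h5 : ε * (⟪V A, A⟫ / α) = ε / α * ⟪V A, A⟫ := by ring
    nlinarith
  rw [e1]; linarith

theorem aux_projdiff (C : Set H) (U V : H →L[ℝ] H) (hVU : ∀ x, V (U x) = x)
    (N : ℝ) (hN : 0 ≤ N) (hlow : ∀ x, ‖x‖ ^ 2 ≤ N * ⟪V x, x⟫) (γ : ℝ) (hγ : 0 < γ)
    (y g b s t : H) (hs : s ∈ C) (ht : t ∈ C)
    (hps : ∀ c ∈ C, ⟪V (y - γ • U (g + b) - s), c - s⟫ ≤ 0)
    (hpt : ∀ c ∈ C, ⟪V (y - γ • U g - t), c - t⟫ ≤ 0) :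
    ‖s - t‖ ≤ γ * N * ‖b‖ := by
  have h1 := hps t ht
  have h2 := hpt s hs
  have h3 := hlow (s - t)
  have e : ⟪V (s - t), s - t⟫ = ⟪V (y - γ • U (g + b) - s), t - s⟫
      + ⟪V (y - γ • U g - t), s - t⟫ - γ * ⟪b, s - t⟫ := by
    simp only [map_sub, map_smul, map_add, hVU, inner_sub_left, inner_sub_right,
      real_inner_smul_left, inner_add_left, smul_add]
    ring
  have h4 : ⟪V (s - t), s - t⟫ ≤ γ * (‖b‖ * ‖s - t‖) := by
    have := neg_le_of_abs_le (abs_real_inner_le_norm b (s - t))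
    nlinarith
  have h5 : ‖s - t‖ ^ 2 ≤ (γ * N * ‖b‖) * ‖s - t‖ := by
    calc _ ≤ N * ⟪V (s - t), s - t⟫ := h3
      _ ≤ N * (γ * (‖b‖ * ‖s - t‖)) := by gcongr
      _ = _ := by ring
  by_cases h : ‖s - t‖ = 0
  · rw [h]; positivity
  · have hp : 0 < ‖s - t‖ := lt_of_le_of_ne (norm_nonneg _) (Ne.symm h)
    nlinarith

theorem aux_minty (C : Set H) (hC : Convex ℝ C) (B : H → H) (hBc : Continuous B) (p : H)
    (hp : p ∈ C) (h : ∀ c ∈ C, 0 ≤ ⟪B c, c - p⟫) : ∀ y ∈ C, ⟪B p, y - p⟫ ≥ 0 := by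
  intro y hy
  have hcont : Continuous (fun s : ℝ => ⟪B (p + s • (y - p)), y - p⟫) := by fun_prop
  have ht : Tendsto (fun s : ℝ => ⟪B (p + s • (y - p)), y - p⟫) (nhdsWithin 0 (Set.Ioi 0))
      (nhds ⟪B p, y - p⟫) := by
    have := (hcont.tendsto 0).mono_left (nhdsWithin_le_nhds (s := Set.Ioi 0))
    simpa using this
  refine ge_of_tendsto ht ?_
  filter_upwards [Ioo_mem_nhdsGT (zero_lt_one (α := ℝ))] with s hs
  have hm : p + s • (y - p) ∈ C := hC.add_smul_sub_mem hp hy ⟨hs.1.le, hs.2.le⟩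
  have h2 := h _ hm
  rw [add_sub_cancel_left, real_inner_smul_right] at h2
  exact nonneg_of_mul_nonneg_right h2 hs.1

theorem aux_coco_lip (β : ℝ) (hβ : 0 < β) (B : H → H)
    (hB : ∀ x y : H, ⟪x - y, B x - B y⟫ ≥ β * ‖B x - B y‖ ^ 2) (x y : H) :
    ‖B x - B y‖ ≤ β⁻¹ * ‖x - y‖ := by
  have h1 := hB x y
  have h2 := real_inner_le_norm (x - y) (B x - B y)
  rw [le_inv_mul_iff₀ hβ]
  by_cases h : ‖B x - B y‖ = 0
  · rw [h]; simp
  · have hp : 0 < ‖B x - B y‖ := lt_of_le_of_ne (norm_nonneg _) (Ne.symm h)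
    nlinarith

end

/-- weak convergence of the variable metric projected forward-backward
algorithm for the variational inequality problem. -/
theorem variable_metric_vip_weak_convergence
    {H : Type*} [NormedAddCommGroup H] [InnerProductSpace ℝ H] [CompleteSpace H]
    (C : Set H) (hCne : C.Nonempty) (hCclosed : IsClosed C) (hCconv : Convex ℝ C)
    (β : ℝ) (hβ : 0 < β) (B : H → H)
    (hB : ∀ x y : H, ⟪x - y, B x - B y⟫ ≥ β * ‖B x - B y‖ ^ 2)
    (hΩ : {xs : H | xs ∈ C ∧ ∀ y ∈ C, ⟪B xs, y - xs⟫ ≥ 0}.Nonempty)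
    (α : ℝ) (hα : 0 < α) (μ : ℝ) (hμ : 0 < μ)
    (U V : ℕ → H →L[ℝ] H)
    (hU : ∀ k, IsSelfAdjoint (U k))
    (hUpos : ∀ k, ∀ z : H, ⟪U k z, z⟫ ≥ α * ‖z‖ ^ 2)
    (hV : ∀ k, IsSelfAdjoint (V k))
    (hVU : ∀ k, (V k).comp (U k) = ContinuousLinearMap.id ℝ H)
    (hUV : ∀ k, (U k).comp (V k) = ContinuousLinearMap.id ℝ H)
    (hUnorm : ∀ k, ‖U k‖ ≤ μ)
    (η : ℕ → ℝ) (hη0 : ∀ k, 0 ≤ η k) (hηsum : Summable η)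
    (hUmono : ∀ k, ∀ z : H, (1 + η k) * ⟪U (k + 1) z, z⟫ ≥ ⟪U k z, z⟫)
    (γ lam αk : ℕ → ℝ)
    (hγ : ∀ k, 0 < γ k ∧ γ k < 2 * β / ‖U k‖)
    (hαk : ∀ k, αk k = 2 * β / (4 * β - γ k * ‖U k‖))
    (lamlb τ γlb : ℝ) (hlamlb : 0 < lamlb) (hτ : 0 < τ) (hγlb : 0 < γlb)
    (hlam : ∀ k, lamlb ≤ lam k ∧ lam k ≤ 1 / αk k - τ)
    (hγ' : ∀ k, γlb ≤ γ k)
    (a b : ℕ → H)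
    (ha : Summable (fun k => lam k * ‖a k‖))
    (hb : Summable (fun k => lam k * ‖b k‖))
    (P : ℕ → H → H)
    (hPmem : ∀ k, ∀ y : H, P k y ∈ C)
    (hPproj : ∀ k, ∀ y : H, ∀ z ∈ C, ⟪V k (y - P k y), z - P k y⟫ ≤ 0)
    (x : ℕ → H)
    (hx : ∀ k, x (k + 1) =
      x k + lam k • (P k (x k - γ k • U k (B (x k) + b k)) + a k - x k)) :
    ∃ p ∈ {xs : H | xs ∈ C ∧ ∀ y ∈ C, ⟪B xs, y - xs⟫ ≥ 0},
      ∀ y : H, Tendsto (fun k => ⟪x k, y⟫) atTop (nhds ⟪p, y⟫) := by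
  have hUs : ∀ k u v, ⟪U k u, v⟫ = ⟪u, U k v⟫ := fun k u v => (hU k).isSymmetric u v
  have hVs : ∀ k u v, ⟪V k u, v⟫ = ⟪u, V k v⟫ := fun k u v => (hV k).isSymmetric u v
  have hVU1 : ∀ k u, V k (U k u) = u := fun k u => by
    have := congrArg (fun T => T u) (hVU k); simpa using this
  have hUV1 : ∀ k u, U k (V k u) = u := fun k u => by
    have := congrArg (fun T => T u) (hUV k); simpa using this
  have hU0 : ∀ k u, 0 ≤ ⟪U k u, u⟫ := fun k u => le_trans (by positivity) (hUpos k u)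
  have hUn : ∀ k, 0 < ‖U k‖ := by
    intro k
    rcases (norm_nonneg (U k)).eq_or_lt with h | h
    · have := hγ k
      rw [← h] at this
      simp only [div_zero] at this
      linarith [this.1, this.2]
    · exact h
  have hlowk : ∀ k u, ‖u‖ ^ 2 ≤ ‖U k‖ * ⟪V k u, u⟫ := fun k u =>
    aux_vlow (U k) (V k) (hUs k) (hUV1 k) (hU0 k) _ (hUn k) le_rfl u
  have hlow : ∀ k u, ‖u‖ ^ 2 ≤ μ * ⟪V k u, u⟫ := fun k u =>
    aux_vlow (U k) (V k) (hUs k) (hUV1 k) (hU0 k) _ hμ (hUnorm k) u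
  have hhigh : ∀ k u, α * ‖V k u‖ ^ 2 ≤ ⟪V k u, u⟫ := fun k u =>
    aux_vhigh (U k) (V k) (hUV1 k) α (hUpos k) u
  have hV0 : ∀ k u, 0 ≤ ⟪V k u, u⟫ := fun k u => le_trans (by positivity) (hhigh k u)
  have hVn : ∀ k u, ‖V k u‖ ≤ ‖u‖ / α := fun k u =>
    aux_vnorm (U k) (V k) (hUV1 k) α hα (hUpos k) u
  have hVup : ∀ k u, ⟪V k u, u⟫ ≤ α⁻¹ * ‖u‖ ^ 2 := fun k u => by
    calc ⟪V k u, u⟫ ≤ ‖V k u‖ * ‖u‖ := real_inner_le_norm _ _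
      _ ≤ (‖u‖ / α) * ‖u‖ := by gcongr; exact hVn k u
      _ = _ := by ring
  have hVm : ∀ k u, ⟪V (k + 1) u, u⟫ ≤ (1 + η k) * ⟪V k u, u⟫ := fun k u =>
    aux_mono (U k) (V k) (U (k + 1)) (V (k + 1)) (hUs k) (hUV1 k) (hUV1 (k + 1)) (hU0 k)
      (η k) (hη0 k) (hUmono k) u
  have hγU : ∀ k, γ k * ‖U k‖ < 2 * β := fun k => (lt_div_iff₀ (hUn k)).1 (hγ k).2
  have hlam2 : ∀ k, lam k ≤ 2 - γ k * ‖U k‖ / (2 * β) - τ := by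
    intro k
    have h1 := (hlam k).2
    have h2 : 1 / αk k = 2 - γ k * ‖U k‖ / (2 * β) := by
      rw [hαk, one_div_div]
      field_simp
      ring
    rw [h2] at h1
    exact h1
  have hlam0 : ∀ k, 0 ≤ lam k := fun k => hlamlb.le.trans (hlam k).1
  -- the exact iterates
  obtain ⟨t, ht⟩ : ∃ t : ℕ → H, ∀ k, t k = P k (x k - γ k • U k (B (x k))) := ⟨_, fun _ => rfl⟩
  have htC : ∀ k, t k ∈ C := fun k => by rw [ht]; exact hPmem _ _
  have htp : ∀ k, ∀ c ∈ C, ⟪V k (x k - γ k • U k (B (x k)) - t k), c - t k⟫ ≤ 0 := by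
    intro k c hc
    rw [ht]; exact hPproj k _ c hc
  obtain ⟨ε, hε⟩ : ∃ ε : ℕ → ℝ, ∀ k, ε k = lam k * ‖a k‖ + lam k * ‖b k‖ := ⟨_, fun _ => rfl⟩
  have hε0 : ∀ k, 0 ≤ ε k := fun k => by
    have := hlam0 k
    rw [hε]; positivity
  have hεs : Summable ε := (ha.add hb).congr (fun k => (hε k).symm)
  obtain ⟨K, hK⟩ : ∃ K : ℝ, K = 1 + 2 * β := ⟨_, rfl⟩
  -- Fejer estimate
  have hfej : ∀ z, z ∈ C → (∀ y ∈ C, ⟪B z, y - z⟫ ≥ 0) → ∀ k,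
      ⟪V (k + 1) (x (k + 1) - z), x (k + 1) - z⟫
       ≤ (1 + (η k + ε k / α + η k * (ε k / α))) * ⟪V k (x k - z), x k - z⟫
        - lamlb * τ * ⟪V k (x k - t k), x k - t k⟫
        + (1 + η k) * (K ^ 2 * ε k + K ^ 2 / α * (ε k * ε k)) := by
    intro z hz hzs k
    set s := P k (x k - γ k • U k (B (x k) + b k)) with hs
    have hst : ‖s - t k‖ ≤ 2 * β * ‖b k‖ := by
      refine (aux_projdiff C (U k) (V k) (hVU1 k) ‖U k‖ (norm_nonneg _) (hlowk k) (γ k) (hγ k).1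
        (x k) (B (x k)) (b k) s (t k) (hPmem _ _) (htC k) (hPproj k _) (htp k)).trans ?_
      exact mul_le_mul_of_nonneg_right (hγU k).le (norm_nonneg _)
    have h1 := aux_step1 C β hβ B hB (U k) (V k) (hVs k) (hVU1 k) (hV0 k) ‖U k‖ (hlowk k) (γ k)
      (lam k) τ (hγ k).1 (hlam0 k) (hlam2 k) (x k) (t k) z hz (htC k) hzs (htp k)
    set A := x k - z + lam k • (t k - x k) with hA
    have he : ‖lam k • (s - t k + a k)‖ ≤ K * ε k := by
      rw [norm_smul, Real.norm_of_nonneg (hlam0 k), hε, hK]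
      have h2 : ‖s - t k + a k‖ ≤ 2 * β * ‖b k‖ + ‖a k‖ :=
        (norm_add_le _ _).trans (by gcongr)
      have h3 := mul_le_mul_of_nonneg_left h2 (hlam0 k)
      have h4 : 0 ≤ lam k * ‖b k‖ := mul_nonneg (hlam0 k) (norm_nonneg _)
      have h5 : 0 ≤ β * (lam k * ‖a k‖) :=
        mul_nonneg hβ.le (mul_nonneg (hlam0 k) (norm_nonneg _))
      nlinarith
    have h2 := aux_step2 (V k) (hVs k) α hα (hhigh k) (hVn k) A _ K (ε k) (hε0 k) he
    have hxA : x (k + 1) - z = A + lam k • (s - t k + a k) := by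
      rw [hx k, hA]
      simp only [smul_sub, smul_add]
      abel
    have h3 := hVm k (x (k + 1) - z)
    rw [hxA] at h3 ⊢
    have hη1 : 0 ≤ 1 + η k := by linarith [hη0 k]
    have hεα : 0 ≤ ε k / α := div_nonneg (hε0 k) hα.le
    have h4 := mul_le_mul_of_nonneg_left h2 hη1
    have hd : lamlb * τ * ⟪V k (x k - t k), x k - t k⟫
        ≤ lam k * τ * ⟪V k (x k - t k), x k - t k⟫ := by
      have := hV0 k (x k - t k)
      have := (hlam k).1
      gcongr
    have hd0 : 0 ≤ lamlb * τ * ⟪V k (x k - t k), x k - t k⟫ :=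
      mul_nonneg (by positivity) (hV0 k _)
    have h5 : ⟪V k A, A⟫ ≤ ⟪V k (x k - z), x k - z⟫
        - lamlb * τ * ⟪V k (x k - t k), x k - t k⟫ := by linarith
    have h6 : 0 ≤ η k + ε k / α + η k * (ε k / α) := by
      have := hη0 k
      positivity
    have h7 := mul_le_mul_of_nonneg_left h5 (by linarith :
      0 ≤ 1 + (η k + ε k / α + η k * (ε k / α)))
    have h8 := mul_nonneg h6 hd0
    refine h3.trans (h4.trans ?_)
    have h9 : (1 + η k) * ((1 + ε k / α) * ⟪V k A, A⟫ + (K ^ 2 * ε k + K ^ 2 / α * (ε k * ε k)))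
      = (1 + (η k + ε k / α + η k * (ε k / α))) * ⟪V k A, A⟫
        + (1 + η k) * (K ^ 2 * ε k + K ^ 2 / α * (ε k * ε k)) := by ring
    rw [h9]
    linarith
  have hεαs : Summable (fun k => ε k / α) := hεs.div_const α
  have hεα0 : ∀ k, 0 ≤ ε k / α := fun k => div_nonneg (hε0 k) hα.le
  have hη's : Summable (fun k => η k + ε k / α + η k * (ε k / α)) :=
    (hηsum.add hεαs).add (aux_summable_mul _ _ hη0 hεα0 hηsum hεαs)
  have hδ1s : Summable (fun k => K ^ 2 * ε k + K ^ 2 / α * (ε k * ε k)) :=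
    (hεs.mul_left _).add ((aux_summable_mul _ _ hε0 hε0 hεs hεs).mul_left _)
  have hδ10 : ∀ k, 0 ≤ K ^ 2 * ε k + K ^ 2 / α * (ε k * ε k) := fun k => by
    have := hε0 k
    positivity
  have hδs : Summable (fun k => (1 + η k) * (K ^ 2 * ε k + K ^ 2 / α * (ε k * ε k))) := by
    refine (hδ1s.add (aux_summable_mul _ _ hη0 hδ10 hηsum hδ1s)).congr (fun k => ?_)
    ring
  have hrs : ∀ z, z ∈ C → (∀ y ∈ C, ⟪B z, y - z⟫ ≥ 0) →
      (∃ l, Tendsto (fun k => ⟪V k (x k - z), x k - z⟫) atTop (nhds l)) ∧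
      Summable (fun k => lamlb * τ * ⟪V k (x k - t k), x k - t k⟫) := by
    intro z hz hzs
    refine aux_rs _ (fun k => η k + ε k / α + η k * (ε k / α)) _
      (fun k => (1 + η k) * (K ^ 2 * ε k + K ^ 2 / α * (ε k * ε k)))
      (fun k => hV0 k _) (fun k => ?_) hη's
      (fun k => mul_nonneg (by positivity) (hV0 k _)) (fun k => ?_) hδs (hfej z hz hzs)
    · have := hη0 k
      have := hεα0 k
      positivity
    · exact mul_nonneg (by linarith [hη0 k]) (hδ10 k)
  obtain ⟨z0, hz0, hz0s⟩ := hΩ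
  obtain ⟨⟨l0, hl0⟩, hsumw⟩ := hrs z0 hz0 hz0s
  have hw0 : Tendsto (fun k => ‖x k - t k‖) atTop (nhds 0) := by
    have h1 := (hsumw.tendsto_atTop_zero).const_mul (μ / (lamlb * τ))
    rw [mul_zero] at h1
    have h2 : Tendsto (fun k => ‖x k - t k‖ ^ 2) atTop (nhds 0) := by
      refine squeeze_zero (fun k => by positivity) (fun k => ?_) h1
      refine (hlow k _).trans (le_of_eq ?_)
      field_simp
    have h3 := h2.sqrt
    simpa using h3
  obtain ⟨R, hR⟩ : ∃ R, ∀ k, ‖x k‖ ≤ R := by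
    obtain ⟨M, hM⟩ := hl0.bddAbove_range
    refine ⟨Real.sqrt (μ * M) + ‖z0‖, fun k => ?_⟩
    have h1 : ⟪V k (x k - z0), x k - z0⟫ ≤ M := hM ⟨k, rfl⟩
    have h2 : ‖x k - z0‖ ≤ Real.sqrt (μ * M) := by
      apply Real.le_sqrt_of_sq_le
      exact (hlow k _).trans (by gcongr)
    have h3 : ‖x k‖ ≤ ‖x k - z0‖ + ‖z0‖ := by
      simpa using norm_add_le (x k - z0) z0
    linarith
  have hBlip := aux_coco_lip β hβ B hB
  have hBc : Continuous B := by
    have : LipschitzWith (Real.toNNReal β⁻¹) B := by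
      refine LipschitzWith.of_dist_le_mul (fun u v => ?_)
      rw [dist_eq_norm, dist_eq_norm, Real.coe_toNNReal _ (inv_nonneg.2 hβ.le)]
      exact hBlip u v
    exact this.continuous
  obtain ⟨RB, hRB⟩ : ∃ RB, ∀ k, ‖B (x k)‖ ≤ RB := by
    refine ⟨β⁻¹ * R + ‖B 0‖, fun k => ?_⟩
    have h1 := hBlip (x k) 0
    rw [sub_zero] at h1
    have h2 : ‖B (x k)‖ ≤ ‖B (x k) - B 0‖ + ‖B 0‖ := by
      simpa using norm_add_le (B (x k) - B 0) (B 0)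
    have h3 : β⁻¹ * ‖x k‖ ≤ β⁻¹ * R := by
      gcongr
      exact hR k
    linarith
  obtain ⟨W, hW⟩ := hw0.bddAbove_range
  have hWk : ∀ k, ‖x k - t k‖ ≤ W := fun k => hW ⟨k, rfl⟩
  -- weak cluster points
  have hclus : ∀ F : Ultrafilter ℕ, (F : Filter ℕ) ≤ atTop →
      ∃ p, (p ∈ C ∧ ∀ y ∈ C, ⟪B p, y - p⟫ ≥ 0) ∧
        ∀ y : H, Tendsto (fun k => ⟪x k, y⟫) F (nhds ⟪p, y⟫) := by
    intro F hF
    obtain ⟨p, hp⟩ := aux_weak_compact x R hR F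
    have hwF : Tendsto (fun k => ‖x k - t k‖) F (nhds 0) := hw0.mono_left hF
    have hwF' : Tendsto (fun k => x k - t k) F (nhds 0) := tendsto_zero_iff_norm_tendsto_zero.2 hwF
    have htF : ∀ y, Tendsto (fun k => ⟪t k, y⟫) F (nhds ⟪p, y⟫) := by
      intro y
      have h1 : Tendsto (fun k => ⟪x k - t k, y⟫) F (nhds ⟪(0 : H), y⟫) :=
        hwF'.inner tendsto_const_nhds
      have h2 := (hp y).sub h1
      rw [inner_zero_left, sub_zero] at h2
      refine h2.congr (fun k => ?_)
      rw [inner_sub_left]; ring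
    have hpC : p ∈ C := by
      have h1 : Tendsto (fun k => ⟪V 0 (p - P 0 p), t k - P 0 p⟫) F
          (nhds ⟪V 0 (p - P 0 p), p - P 0 p⟫) := by
        simp only [inner_sub_right (V 0 (p - P 0 p))]
        refine Tendsto.sub ?_ tendsto_const_nhds
        have := htF (V 0 (p - P 0 p))
        simpa only [real_inner_comm (V 0 (p - P 0 p))] using this
      have h2 : ⟪V 0 (p - P 0 p), p - P 0 p⟫ ≤ 0 :=
        le_of_tendsto' h1 (fun k => hPproj 0 p (t k) (htC k))
      have h3 := hlow 0 (p - P 0 p)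
      have h4 : ‖p - P 0 p‖ ^ 2 ≤ 0 := h3.trans (mul_nonpos_of_nonneg_of_nonpos hμ.le h2)
      have h5 : ‖p - P 0 p‖ = 0 := by
        have := sq_nonneg ‖p - P 0 p‖
        exact pow_eq_zero_iff (two_ne_zero) |>.1 (le_antisymm h4 this)
      rw [sub_eq_zero.1 (norm_eq_zero.1 h5)]
      exact hPmem 0 p
    refine ⟨p, ⟨hpC, aux_minty C hCconv B hBc p hpC (fun c hc => ?_)⟩, hp⟩
    have hlim : Tendsto (fun k => ⟪B c, c - x k⟫) F (nhds ⟪B c, c - p⟫) := by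
      simp only [inner_sub_right (B c)]
      refine Tendsto.sub tendsto_const_nhds ?_
      have := hp (B c)
      simpa only [real_inner_comm (B c)] using this
    obtain ⟨G, hG⟩ : ∃ G, G = γlb⁻¹ * (α⁻¹ * (‖c‖ + R + W)) + RB := ⟨_, rfl⟩
    have hlim2 : Tendsto (fun k => -(G * ‖x k - t k‖)) F (nhds 0) := by
      simpa using (hwF.const_mul G).neg
    refine le_of_tendsto_of_tendsto' hlim2 hlim (fun k => ?_)
    have m1 : ⟪B c, c - x k⟫ ≥ ⟪B (x k), c - x k⟫ := by
      have := hB c (x k)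
      have h0 : 0 ≤ ⟪c - x k, B c - B (x k)⟫ := le_trans (by positivity) this
      rw [real_inner_comm, inner_sub_left] at h0
      linarith
    have m2 : ⟪B (x k), c - x k⟫ = ⟪B (x k), c - t k⟫ - ⟪B (x k), x k - t k⟫ := by
      simp only [inner_sub_right]; ring
    have m3 : ⟪B (x k), x k - t k⟫ ≤ RB * ‖x k - t k‖ :=
      (real_inner_le_norm _ _).trans (by gcongr; exact hRB k)
    have m4 : ⟪V k (x k - t k), c - t k⟫ ≤ γ k * ⟪B (x k), c - t k⟫ := by
      have := htp k c hc
      have e : V k (x k - γ k • U k (B (x k)) - t k) = V k (x k - t k) - γ k • B (x k) := by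
        simp only [map_sub, map_smul, hVU1]; abel
      rw [e, inner_sub_left, real_inner_smul_left] at this
      linarith
    have m5 : ‖c - t k‖ ≤ ‖c‖ + R + W := by
      have e : c - t k = c - x k + (x k - t k) := by abel
      rw [e]
      have := norm_add_le (c - x k) (x k - t k)
      have := norm_sub_le c (x k)
      linarith [hR k, hWk k]
    have m6 : -⟪V k (x k - t k), c - t k⟫ ≤ α⁻¹ * (‖c‖ + R + W) * ‖x k - t k‖ := by
      have h1 := neg_le_of_abs_le (abs_real_inner_le_norm (V k (x k - t k)) (c - t k))
      have h2 : ‖V k (x k - t k)‖ * ‖c - t k‖ ≤ (‖x k - t k‖ / α) * (‖c‖ + R + W) := by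
        gcongr
        exact hVn k _
      have h3 : (‖x k - t k‖ / α) * (‖c‖ + R + W) = α⁻¹ * (‖c‖ + R + W) * ‖x k - t k‖ := by
        ring
      linarith
    have m7 : 0 ≤ ‖c‖ + R + W := (norm_nonneg _).trans m5
    have m8 : -⟪B (x k), c - t k⟫ ≤ γlb⁻¹ * (α⁻¹ * (‖c‖ + R + W) * ‖x k - t k‖) := by
      rcases le_total (-⟪B (x k), c - t k⟫) 0 with h | h
      · exact h.trans (by positivity)
      · rw [le_inv_mul_iff₀ hγlb]
        have := mul_le_mul_of_nonneg_right (hγ' k) h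
        linarith
    rw [hG]
    nlinarith
  -- uniqueness
  have huniq : ∀ (F F' : Ultrafilter ℕ), (F : Filter ℕ) ≤ atTop → (F' : Filter ℕ) ≤ atTop →
      ∀ p q, (p ∈ C ∧ ∀ y ∈ C, ⟪B p, y - p⟫ ≥ 0) → (q ∈ C ∧ ∀ y ∈ C, ⟪B q, y - q⟫ ≥ 0) →
      (∀ y : H, Tendsto (fun k => ⟪x k, y⟫) F (nhds ⟪p, y⟫)) →
      (∀ y : H, Tendsto (fun k => ⟪x k, y⟫) F' (nhds ⟪q, y⟫)) → p = q := by
    intro F F' hF hF' p q hp hq hpt hqt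
    obtain ⟨⟨l1, hl1⟩, -⟩ := hrs p hp.1 hp.2
    obtain ⟨⟨l2, hl2⟩, -⟩ := hrs q hq.1 hq.2
    have hstr := aux_strong V hVs α⁻¹ (inv_pos.2 hα) hV0 hVup η hη0 hηsum hVm
    obtain ⟨Lp, hLp⟩ := hstr p
    obtain ⟨Lq, hLq⟩ := hstr q
    obtain ⟨L, hL⟩ := hstr (p - q)
    have c1 : Tendsto (fun k => ⟪V k p, p⟫) atTop (nhds ⟪Lp, p⟫) := hLp.inner tendsto_const_nhds
    have c2 : Tendsto (fun k => ⟪V k q, q⟫) atTop (nhds ⟪Lq, q⟫) := hLq.inner tendsto_const_nhds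
    obtain ⟨l, hl⟩ : ∃ l, Tendsto (fun k => ⟪x k, V k (p - q)⟫) atTop (nhds l) := by
      refine ⟨_, ((((hl2.sub hl1).add c1).sub c2).mul_const (1 / 2)).congr (fun k => ?_)⟩
      have e1 : ⟪V k p, x k⟫ = ⟪x k, V k p⟫ := real_inner_comm _ _
      have e2 : ⟪V k q, x k⟫ = ⟪x k, V k q⟫ := real_inner_comm _ _
      simp only [map_sub, inner_sub_left, inner_sub_right, e1, e2, hVs k (x k)]
      ring
    have hgen : ∀ (G : Ultrafilter ℕ), (G : Filter ℕ) ≤ atTop → ∀ r : H,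
        (∀ y : H, Tendsto (fun k => ⟪x k, y⟫) G (nhds ⟪r, y⟫)) → ⟪r, L⟫ = l := by
      intro G hG r hr
      have h1 : Tendsto (fun k => ⟪x k, V k (p - q) - L⟫) atTop (nhds 0) := by
        have h2 : Tendsto (fun k => R * ‖V k (p - q) - L‖) atTop (nhds 0) := by
          have h3 := (tendsto_iff_norm_sub_tendsto_zero.1 hL).const_mul R
          rwa [mul_zero] at h3
        refine squeeze_zero_norm (fun k => ?_) h2
        exact (norm_inner_le_norm _ _).trans (by gcongr; exact hR k)
      have h4 := (hr L).add (h1.mono_left hG)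
      rw [add_zero] at h4
      refine tendsto_nhds_unique h4 ((hl.mono_left hG).congr (fun k => ?_))
      rw [inner_sub_right]; ring
    have g1 := hgen F hF p hpt
    have g2 := hgen F' hF' q hqt
    have g3 : ⟪p - q, L⟫ = 0 := by rw [inner_sub_left, g1, g2, sub_self]
    have g4 : Tendsto (fun k => μ * ⟪V k (p - q), p - q⟫) atTop (nhds (μ * ⟪L, p - q⟫)) :=
      (hL.inner tendsto_const_nhds).const_mul μ
    have g5 : ‖p - q‖ ^ 2 ≤ μ * ⟪L, p - q⟫ := ge_of_tendsto' g4 (fun k => hlow k _)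
    rw [real_inner_comm, g3, mul_zero] at g5
    have g6 : ‖p - q‖ = 0 :=
      (pow_eq_zero_iff two_ne_zero).1 (le_antisymm g5 (sq_nonneg _))
    exact sub_eq_zero.1 (norm_eq_zero.1 g6)
  have hF0 : ((Ultrafilter.of (atTop : Filter ℕ) : Ultrafilter ℕ) : Filter ℕ) ≤ atTop :=
    Ultrafilter.of_le _
  obtain ⟨p, hpΩ, hp⟩ := hclus _ hF0
  refine ⟨p, hpΩ, fun y => ?_⟩
  rw [tendsto_iff_ultrafilter]
  intro G hG
  obtain ⟨q, hqΩ, hq⟩ := hclus G hG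
  have := huniq _ G hF0 hG p q hpΩ hqΩ hp hq
  rw [this]
  exact hq y
end

section
/- Let H and G be real Hilbert spaces, let L : H → G be a nonzero bounded linear operator with adjoint L*, and let C ⊆ H and Q ⊆ G be nonempty closed convex sets. Suppose the solution set Ω := {x ∈ C | L x ∈ Q} of the split feasibility problem is nonempty. Let P_Q : G → G be the metric projection onto Q (P_Q w ∈ Q and ⟨w − P_Q w, z − P_Q w⟩ ≤ 0 for all z ∈ Q), and define B : H → H by B x := L*(L x − P_Q(L x)), which is β-cocoercive with β := 1/‖L‖². Assume the variable-metric hypotheses of the context: operators U_k, V_k with ⟨U_k x, x⟩ ≥ α‖x‖² (α > 0), V_k∘U_k = U_k∘V_k = id, ‖U_k‖ ≤ μ, (1 + η_k)⟨U_{k+1}x, x⟩ ≥ ⟨U_k x, x⟩ with η_k ≥ 0 summable; parameters γ_k ∈ (0, 2β/‖U_k‖), α_k := 2β/(4β − γ_k‖U_k‖), λ_k with λ̲ ≤ λ_k ≤ 1/α_k − τ (λ̲, τ > 0) and γ_k ≥ γ̲ > 0; errors a_k, b_k with ∑_k λ_k‖a_k‖ < ∞, ∑_k λ_k‖b_k‖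 < ∞; and projection maps P_k : H → H satisfying, for every y ∈ H, P_k y ∈ C and ⟨V_k(y − P_k y), z − P_k y⟩ ≤ 0 for all z ∈ C. Define from x_0 ∈ H the iteration x_{k+1} = x_k + λ_k·(P_k(x_k − γ_k·U_k(L*(L x_k − P_Q(L x_k)) + b_k)) + a_k − x_k). Then there exists p ∈ Ω such that x_k converges weakly to p, i.e., ⟨x_k, y⟩ → ⟨p, y⟩ for every y ∈ H. -/
open RealInnerProductSpace Filter

namespace VMSFP

variable {H : Type*} [NormedAddCommGroup H] [InnerProductSpace ℝ H]

lemma psd_cs (T : H →L[ℝ] H) (hs : ∀ x y, ⟪T x, y⟫ = ⟪T y, x⟫) (hp : ∀ x, 0 ≤ ⟪T x, x⟫)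
    (x y : H) : ⟪T x, y⟫ ^ 2 ≤ ⟪T x, x⟫ * ⟪T y, y⟫ := by
  have h : ∀ s : ℝ, 0 ≤ ⟪T x, x⟫ * (s * s) + (2 * ⟪T x, y⟫) * s + ⟪T y, y⟫ := by
    intro s
    have := hp (s • x + y)
    simp only [map_add, map_smul, inner_add_left, inner_add_right, real_inner_smul_left,
      real_inner_smul_right] at this
    rw [hs y x] at this
    linarith
  have := discrim_le_zero h
  unfold discrim at this
  linarith

lemma psd_norm_sq (T : H →L[ℝ] H) (hs : ∀ x y, ⟪T x, y⟫ = ⟪T y, x⟫) (hp : ∀ x, 0 ≤ ⟪T x, x⟫)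
    (M : ℝ) (hM : ∀ x, ⟪T x, x⟫ ≤ M * ‖x‖ ^ 2)
    (x : H) : ‖T x‖ ^ 2 ≤ M * ⟪T x, x⟫ := by
  have h1 := psd_cs T hs hp x (T x)
  have h2 := hM (T x)
  rw [real_inner_self_eq_norm_sq] at h1
  have h3 := hp x
  rcases eq_or_ne (T x) 0 with h0 | h0
  · simp [h0]
  · have : 0 < ‖T x‖ ^ 2 := by positivity
    have h4 : (‖T x‖ ^ 2) ^ 2 ≤ ⟪T x, x⟫ * (M * ‖T x‖ ^ 2) :=
      h1.trans (mul_le_mul_of_nonneg_left h2 h3)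
    nlinarith

lemma psd_tri (T : H →L[ℝ] H) (hs : ∀ x y, ⟪T x, y⟫ = ⟪T y, x⟫) (hp : ∀ x, 0 ≤ ⟪T x, x⟫)
    (x y : H) : √⟪T (x + y), x + y⟫ ≤ √⟪T x, x⟫ + √⟪T y, y⟫ := by
  apply Real.sqrt_le_iff.2 ⟨by positivity, ?_⟩
  have h : ⟪T x, y⟫ ≤ √⟪T x, x⟫ * √⟪T y, y⟫ := by
    rw [← Real.sqrt_mul (hp x)]
    exact Real.le_sqrt_of_sq_le (psd_cs T hs hp x y)
  rw [add_sq, Real.sq_sqrt (hp x), Real.sq_sqrt (hp y)]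
  simp only [map_add, inner_add_left, inner_add_right]
  rw [hs y x]
  linarith

lemma proj_nonexp (V : H →L[ℝ] H) (hs : ∀ x y, ⟪V x, y⟫ = ⟪V y, x⟫) (hp : ∀ x, 0 ≤ ⟪V x, x⟫)
    (C : Set H) (P : H → H) (hPmem : ∀ y : H, P y ∈ C)
    (hPproj : ∀ y : H, ∀ z ∈ C, ⟪V (y - P y), z - P y⟫ ≤ 0) (y y' : H) :
    √⟪V (P y - P y'), P y - P y'⟫ ≤ √⟪V (y - y'), y - y'⟫ := by
  have h1 := hPproj y (P y') (hPmem _)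
  have h2 := hPproj y' (P y) (hPmem _)
  have h3 : ⟪V (P y - P y'), P y - P y'⟫ ≤ ⟪V (P y - P y'), y - y'⟫ := by
    rw [hs _ (y - y')]
    simp only [map_sub, inner_sub_left, inner_sub_right] at *
    linarith
  have h4 := psd_cs V hs hp (P y - P y') (y - y')
  apply Real.sqrt_le_sqrt
  have h5 := hp (P y - P y')
  have h6 := hp (y - y')
  rcases h5.eq_or_lt with h0 | h0
  · rw [← h0]; exact h6
  · nlinarith

/-- the product normalisation -/
noncomputable def prodη (η : ℕ → ℝ) (k : ℕ) : ℝ := ∏ j ∈ Finset.range k, (1 + η j)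

lemma prodη_succ (η : ℕ → ℝ) (k : ℕ) : prodη η (k + 1) = prodη η k * (1 + η k) :=
  Finset.prod_range_succ _ _

lemma one_le_prodη (η : ℕ → ℝ) (h : ∀ k, 0 ≤ η k) (k : ℕ) : 1 ≤ prodη η k := by
  induction k with
  | zero => simp [prodη]
  | succ k ih => rw [prodη_succ]; nlinarith [h k]

lemma prodη_tendsto (η : ℕ → ℝ) (h : ∀ k, 0 ≤ η k) (hs : Summable η) :
    ∃ l, Tendsto (prodη η) atTop (nhds l) := by
  have hm : Monotone (prodη η) := monotone_nat_of_le_succ fun k => by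
    rw [prodη_succ]; nlinarith [h k, one_le_prodη η h k]
  refine ⟨_, tendsto_atTop_ciSup hm ⟨Real.exp (∑' j, η j), ?_⟩⟩
  rintro _ ⟨k, rfl⟩
  calc prodη η k ≤ ∏ j ∈ Finset.range k, Real.exp (η j) := by
        apply Finset.prod_le_prod
        · intro i _; linarith [h i]
        · intro i _; linarith [Real.add_one_le_exp (η i)]
    _ = Real.exp (∑ j ∈ Finset.range k, η j) := (Real.exp_sum _ _).symm
    _ ≤ _ := Real.exp_le_exp.2 (hs.sum_le_tsum _ fun i _ => h i)

lemma quasi_tendsto (η : ℕ → ℝ) (h : ∀ k, 0 ≤ η k) (hs : Summable η)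
    (ε : ℕ → ℝ) (hε : ∀ k, 0 ≤ ε k) (hεs : Summable ε) (s : ℕ → ℝ) (hs0 : ∀ k, 0 ≤ s k)
    (hstep : ∀ k, s (k + 1) ≤ (1 + η k) * (s k + ε k)) :
    ∃ l, Tendsto s atTop (nhds l) := by
  obtain ⟨lp, hlp⟩ := prodη_tendsto η h hs
  have hpos : ∀ k, 0 < prodη η k := fun k => by linarith [one_le_prodη η h k]
  let g : ℕ → ℝ := fun k => s k / prodη η k - ∑ j ∈ Finset.range k, ε j
  have hg : Antitone g := antitone_nat_of_succ_le fun k => by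
    simp only [g, Finset.sum_range_succ]
    have h1 : s (k + 1) / prodη η (k + 1) ≤ (s k + ε k) / prodη η k := by
      rw [prodη_succ, div_le_div_iff₀ (mul_pos (hpos k) (by linarith [h k])) (hpos k)]
      nlinarith [hstep k, hpos k]
    have h2 : ε k / prodη η k ≤ ε k := div_le_self (hε k) (one_le_prodη η h k)
    rw [add_div] at h1
    linarith
  have hgb : BddBelow (Set.range g) := by
    refine ⟨-∑' j, ε j, ?_⟩
    rintro _ ⟨k, rfl⟩
    have : ∑ j ∈ Finset.range k, ε j ≤ ∑' j, ε j := hεs.sum_le_tsum _ fun i _ => hε i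
    have h3 : 0 ≤ s k / prodη η k := div_nonneg (hs0 k) (hpos k).le
    simp only [g]; linarith
  have hgt := tendsto_atTop_ciInf hg hgb
  have := (hgt.add hεs.hasSum.tendsto_sum_nat).mul hlp
  refine ⟨_, this.congr fun k => ?_⟩
  simp only [g, sub_add_cancel]
  field_simp [(hpos k).ne']

lemma strong_conv [CompleteSpace H] (η : ℕ → ℝ) (h : ∀ k, 0 ≤ η k) (hs : Summable η)
    (V : ℕ → H →L[ℝ] H) (hsym : ∀ k x y, ⟪V k x, y⟫ = ⟪V k y, x⟫) (hp : ∀ k x, 0 ≤ ⟪V k x, x⟫)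
    (M : ℝ) (hM : ∀ k x, ⟪V k x, x⟫ ≤ M * ‖x‖ ^ 2)
    (hmono : ∀ k x, ⟪V (k + 1) x, x⟫ ≤ (1 + η k) * ⟪V k x, x⟫) (w : H) :
    ∃ v, Tendsto (fun k => V k w) atTop (nhds v) := by
  obtain ⟨lp, hlp⟩ := prodη_tendsto η h hs
  have hpos : ∀ k, 0 < prodη η k := fun k => by linarith [one_le_prodη η h k]
  let W : ℕ → H →L[ℝ] H := fun k => (prodη η k)⁻¹ • V k
  have hW : ∀ k x y, ⟪W k x, y⟫ = (prodη η k)⁻¹ * ⟪V k x, y⟫ := by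
    intro k x y; simp [W, real_inner_smul_left]
  have hWp : ∀ k x, 0 ≤ ⟪W k x, x⟫ := fun k x => by
    rw [hW]; exact mul_nonneg (inv_nonneg.2 (hpos k).le) (hp k x)
  have hWM : ∀ k x, ⟪W k x, x⟫ ≤ M * ‖x‖ ^ 2 := fun k x => by
    rw [hW]
    exact (mul_le_of_le_one_left (hp k x) (inv_le_one_of_one_le₀ (one_le_prodη η h k))).trans
      (hM k x)
  have hWa : ∀ x, Antitone fun k => ⟪W k x, x⟫ := fun x => antitone_nat_of_succ_le fun k => by
    simp only [hW, prodη_succ]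
    have h1 : 0 < 1 + η k := by linarith [h k]
    rw [mul_inv, mul_assoc]
    apply mul_le_mul_of_nonneg_left _ (inv_nonneg.2 (hpos k).le)
    rw [inv_mul_le_iff₀ h1]
    exact hmono k x
  have key : ∀ m n, m ≤ n → ‖W m w - W n w‖ ^ 2 ≤ M * (⟪W m w, w⟫ - ⟪W n w, w⟫) := by
    intro m n hmn
    have := psd_norm_sq (W m - W n) (fun x y => by
        simp only [sub_apply, inner_sub_left, hW]
        rw [hsym m x y, hsym n x y])
      (fun x => by
        simp only [sub_apply, inner_sub_left]
        linarith [hWa x hmn]) M (fun x => by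
        simp only [sub_apply, inner_sub_left]
        linarith [hWM m x, hWp n x]) w
    simpa only [sub_apply, inner_sub_left] using this
  have hlim := tendsto_atTop_ciInf (hWa w) ⟨0, by rintro _ ⟨k, rfl⟩; exact hWp k w⟩
  have hc := hlim.cauchySeq
  have hC : CauchySeq fun k => W k w := by
    rw [Metric.cauchySeq_iff'] at hc ⊢
    intro e he
    obtain ⟨N, hN⟩ := hc (e ^ 2 / (|M| + 1)) (by positivity)
    refine ⟨N, fun n hn => ?_⟩
    have h1 := hN n hn
    rw [Real.dist_eq, abs_sub_comm, lt_div_iff₀ (by positivity)] at h1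
    have h2 := key N n hn
    rw [dist_comm, dist_eq_norm]
    have h3 := le_abs_self (⟪W N w, w⟫ - ⟪W n w, w⟫)
    have h4 : M * (⟪W N w, w⟫ - ⟪W n w, w⟫) ≤ |M| * |⟪W N w, w⟫ - ⟪W n w, w⟫| := by
      rw [← abs_mul]; exact le_abs_self _
    have h5 := abs_nonneg (⟪W N w, w⟫ - ⟪W n w, w⟫)
    apply lt_of_pow_lt_pow_left₀ 2 he.le
    nlinarith
  obtain ⟨v, hv⟩ := cauchySeq_tendsto_of_complete hC
  refine ⟨_, (hlp.smul hv).congr fun k => ?_⟩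
  simp [W, smul_smul, (hpos k).ne']

lemma ultra_weak [CompleteSpace H] (x : ℕ → H) (R : ℝ) (hR : ∀ k, ‖x k‖ ≤ R)
    (g : Ultrafilter ℕ) :
    ∃ p : H, ∀ y, Tendsto (fun k => ⟪x k, y⟫) g (nhds ⟪p, y⟫) := by
  have hc := WeakDual.isCompact_closedBall (𝕜 := ℝ) (E := H) 0 R
  let f : ℕ → WeakDual ℝ H := fun k =>
    StrongDual.toWeakDual (InnerProductSpace.toDual ℝ H (x k))
  obtain ⟨q, -, hq⟩ := hc.ultrafilter_le_nhds (g.map f) (by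
    simp only [le_principal_iff]
    refine Filter.mem_map.2 (Filter.univ_mem' fun k => ?_)
    simp [f, hR k])
  refine ⟨(InnerProductSpace.toDual ℝ H).symm (WeakDual.toStrongDual q), fun y => ?_⟩
  have h1 : Tendsto f g (nhds q) := hq
  have h2 := ((WeakDual.eval_continuous y).tendsto q).comp h1
  rw [InnerProductSpace.toDual_symm_apply]
  exact h2

lemma step_ineq {G : Type*} [NormedAddCommGroup G] [InnerProductSpace ℝ G]
    (L : H →L[ℝ] G) (V : H →L[ℝ] H) (hs : ∀ x y, ⟪V x, y⟫ = ⟪V y, x⟫)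
    (x p t u Bx : H) (w : G) (γ lam ρ β τ : ℝ) (hβ : 0 < β) (hβL : β * ‖L‖ ^ 2 = 1)
    (hVu : V u = Bx) (hBx : ∀ d, ⟪Bx, d⟫ = ⟪w, L d⟫)
    (hw : ‖w‖ ^ 2 ≤ ⟪w, L (x - p)⟫)
    (ht : ⟪V (x - γ • u - t), p - t⟫ ≤ 0)
    (hd : ‖x - t‖ ^ 2 ≤ ρ * ⟪V (x - t), x - t⟫) (hγ : 0 < γ) (hγρ : γ * ρ < 2 * β)
    (hτ : 0 < τ) (hlam0 : 0 < lam) (hlam : lam ≤ 2 - γ * ρ / (2 * β) - τ)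
    (hp : 0 ≤ ⟪V (x - t), x - t⟫) :
    ⟪V (x + lam • (t - x) - p), x + lam • (t - x) - p⟫ ≤ ⟪V (x - p), x - p⟫
      - (lam * (τ / 2) * ⟪V (x - t), x - t⟫ + 2 * lam * γ * (1 - 1 / (1 + τ / 2)) * ‖w‖ ^ 2) := by
  set d := x - t with hd_def
  set D := ⟪V d, d⟫
  have e1 : x + lam • (t - x) - p = (x - p) - lam • d := by
    rw [hd_def, ← neg_sub x t, smul_neg]; abel
  have e2 : ⟪V (x + lam • (t - x) - p), x + lam • (t - x) - p⟫ =
      ⟪V (x - p), x - p⟫ - 2 * lam * ⟪V d, x - p⟫ + lam ^ 2 * D := by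
    rw [e1]
    generalize x - p = q
    simp only [map_sub, map_smul, inner_sub_left, inner_sub_right, real_inner_smul_left,
      real_inner_smul_right, D]
    rw [hs q d]; ring
  have e3 : ⟪V d, d - (x - p)⟫ - γ * ⟪Bx, d - (x - p)⟫ ≤ 0 := by
    have a1 : p - t = d - (x - p) := by rw [hd_def]; abel
    have a2 : x - γ • u - t = d - γ • u := by rw [hd_def]; abel
    rw [a1, a2, map_sub, map_smul, hVu, inner_sub_left, real_inner_smul_left] at ht
    exact ht
  rw [inner_sub_right _ d, inner_sub_right _ d, hBx (x - p), hBx d] at e3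
  have e4 : ⟪w, L d⟫ ≤ ‖w‖ * (‖L‖ * ‖d‖) :=
    (real_inner_le_norm _ _).trans (mul_le_mul_of_nonneg_left (L.le_opNorm d) (norm_nonneg _))
  have e5 : γ * (⟪w, L d⟫ - ⟪w, L (x - p)⟫) ≤ γ * (‖w‖ * (‖L‖ * ‖d‖) - ‖w‖ ^ 2) :=
    mul_le_mul_of_nonneg_left (by linarith) hγ.le
  set κ := γ * ρ / (2 * β) with hκ
  have hκ1 : κ < 1 := by rw [hκ, div_lt_one (by positivity)]; exact hγρ
  set θ := 1 / (1 + τ / 2) with hθ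
  have hθ0 : 0 < θ := by positivity
  have hθ1 : θ * (1 + τ / 2) = 1 := by rw [hθ]; field_simp
  set r := ‖w‖
  set m := ‖L‖ * ‖d‖ with hm
  -- Young
  have e6 : 2 * (r * m) ≤ 2 * θ * r ^ 2 + (1 + τ / 2) / 2 * m ^ 2 := by
    have : 0 ≤ 2 * θ * (r - (1 + τ / 2) / 2 * m) ^ 2 := by positivity
    have e : 2 * θ * (r - (1 + τ / 2) / 2 * m) ^ 2 = 2 * θ * r ^ 2
      - 2 * (θ * (1 + τ / 2)) * (r * m) + (θ * (1 + τ / 2)) * ((1 + τ / 2) / 2 * m ^ 2) := by ring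
    rw [e, hθ1] at this
    linarith
  have e7 : γ * m ^ 2 ≤ 2 * κ * D := by
    have b1 : m ^ 2 ≤ ‖L‖ ^ 2 * (ρ * D) := by
      rw [hm, mul_pow]; exact mul_le_mul_of_nonneg_left hd (by positivity)
    have b2 : ‖L‖ ^ 2 = 1 / β := by field_simp; linarith
    rw [b2] at b1
    calc γ * m ^ 2 ≤ γ * (1 / β * (ρ * D)) := mul_le_mul_of_nonneg_left b1 hγ.le
      _ = _ := by rw [hκ]; field_simp
  have e8 : γ * (2 * (r * m)) ≤ 2 * γ * θ * r ^ 2 + (κ + τ / 2) * D := by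
    have c1 := mul_le_mul_of_nonneg_left e6 hγ.le
    have c2 : (1 + τ / 2) / 2 * (γ * m ^ 2) ≤ (1 + τ / 2) / 2 * (2 * κ * D) :=
      mul_le_mul_of_nonneg_left e7 (by positivity)
    have c3 : κ * (τ / 2 * D) ≤ 1 * (τ / 2 * D) :=
      mul_le_mul_of_nonneg_right hκ1.le (by positivity)
    linarith
  have e9 : (κ + τ) * D ≤ (2 - lam) * D := mul_le_mul_of_nonneg_right (by linarith) hp
  have e10 : - 2 * ⟪V d, x - p⟫ + lam * D ≤ - (τ / 2 * D + 2 * γ * (1 - θ) * r ^ 2) := by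
    have hD : ⟪V d, d⟫ = D := rfl
    rw [hD] at e3
    linarith
  rw [e2]
  have := mul_le_mul_of_nonneg_left e10 hlam0.le
  linarith

lemma psd_scale (T : H →L[ℝ] H) (c : ℝ) (hc : 0 ≤ c) (z : H) :
    √⟪T (c • z), c • z⟫ = c * √⟪T z, z⟫ := by
  rw [map_smul, real_inner_smul_left, real_inner_smul_right, ← mul_assoc,
    Real.sqrt_mul (by positivity), Real.sqrt_mul_self hc]

end VMSFP


open VMSFP in
set_option maxHeartbeats 4000000 in
/-- weak convergence of the variable metric CQ-type algorithm for the
split feasibility problem. -/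
theorem variable_metric_split_feasibility_weak_convergence
    {H : Type*} [NormedAddCommGroup H] [InnerProductSpace ℝ H] [CompleteSpace H]
    {G : Type*} [NormedAddCommGroup G] [InnerProductSpace ℝ G] [CompleteSpace G]
    (L : H →L[ℝ] G) (hL : L ≠ 0)
    (C : Set H) (hCne : C.Nonempty) (hCclosed : IsClosed C) (hCconv : Convex ℝ C)
    (Q : Set G) (hQne : Q.Nonempty) (hQclosed : IsClosed Q) (hQconv : Convex ℝ Q)
    (hΩ : {z : H | z ∈ C ∧ L z ∈ Q}.Nonempty)
    (PQ : G → G)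
    (hPQmem : ∀ w : G, PQ w ∈ Q)
    (hPQproj : ∀ w : G, ∀ z ∈ Q, ⟪w - PQ w, z - PQ w⟫ ≤ 0)
    (B : H → H)
    (hBdef : ∀ z : H, B z = (ContinuousLinearMap.adjoint L) (L z - PQ (L z)))
    (β : ℝ) (hβ : β = 1 / ‖L‖ ^ 2)
    (α : ℝ) (hα : 0 < α) (μ : ℝ) (hμ : 0 < μ)
    (U V : ℕ → H →L[ℝ] H)
    (hU : ∀ k, IsSelfAdjoint (U k))
    (hUpos : ∀ k, ∀ z : H, ⟪U k z, z⟫ ≥ α * ‖z‖ ^ 2)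
    (hV : ∀ k, IsSelfAdjoint (V k))
    (hVU : ∀ k, (V k).comp (U k) = ContinuousLinearMap.id ℝ H)
    (hUV : ∀ k, (U k).comp (V k) = ContinuousLinearMap.id ℝ H)
    (hUnorm : ∀ k, ‖U k‖ ≤ μ)
    (η : ℕ → ℝ) (hη0 : ∀ k, 0 ≤ η k) (hηsum : Summable η)
    (hUmono : ∀ k, ∀ z : H, (1 + η k) * ⟪U (k + 1) z, z⟫ ≥ ⟪U k z, z⟫)
    (γ lam αk : ℕ → ℝ)
    (hγ : ∀ k, 0 < γ k ∧ γ k < 2 * β / ‖U k‖)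
    (hαk : ∀ k, αk k = 2 * β / (4 * β - γ k * ‖U k‖))
    (lamlb τ γlb : ℝ) (hlamlb : 0 < lamlb) (hτ : 0 < τ) (hγlb : 0 < γlb)
    (hlam : ∀ k, lamlb ≤ lam k ∧ lam k ≤ 1 / αk k - τ)
    (hγ' : ∀ k, γlb ≤ γ k)
    (a b : ℕ → H)
    (ha : Summable (fun k => lam k * ‖a k‖))
    (hb : Summable (fun k => lam k * ‖b k‖))
    (P : ℕ → H → H)
    (hPmem : ∀ k, ∀ y : H, P k y ∈ C)
    (hPproj : ∀ k, ∀ y : H, ∀ z ∈ C, ⟪V k (y - P k y), z - P k y⟫ ≤ 0)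
    (x : ℕ → H)
    (hx : ∀ k, x (k + 1) =
      x k + lam k • (P k (x k - γ k • U k (B (x k) + b k)) + a k - x k)) :
    ∃ p ∈ {z : H | z ∈ C ∧ L z ∈ Q},
      ∀ y : H, Tendsto (fun k => ⟪x k, y⟫) atTop (nhds ⟪p, y⟫) := by
  have hsL : ‖L‖ ≠ 0 := norm_ne_zero_iff.2 hL
  have hβ0 : 0 < β := by rw [hβ]; positivity
  have hβL : β * ‖L‖ ^ 2 = 1 := by rw [hβ]; field_simp
  have hVUz : ∀ k z, V k (U k z) = z := fun k z => by
    simpa using congrArg (fun T : H →L[ℝ] H => T z) (hVU k)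
  have hUVz : ∀ k z, U k (V k z) = z := fun k z => by
    simpa using congrArg (fun T : H →L[ℝ] H => T z) (hUV k)
  have hUs : ∀ k y z, ⟪U k y, z⟫ = ⟪U k z, y⟫ := fun k y z => by
    rw [real_inner_comm y (U k z)]; exact (hU k).isSymmetric y z
  have hVs : ∀ k y z, ⟪V k y, z⟫ = ⟪V k z, y⟫ := fun k y z => by
    rw [real_inner_comm y (V k z)]; exact (hV k).isSymmetric y z
  have hUp : ∀ k z, 0 ≤ ⟪U k z, z⟫ := fun k z => le_trans (by positivity) (hUpos k z)
  have hUle : ∀ k z, ⟪U k z, z⟫ ≤ ‖U k‖ * ‖z‖ ^ 2 := fun k z => by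
    have h1 := real_inner_le_norm (U k z) z
    have h2 := mul_le_mul_of_nonneg_right ((U k).le_opNorm z) (norm_nonneg z)
    nlinarith
  have hVlow : ∀ k z, α * ‖V k z‖ ^ 2 ≤ ⟪V k z, z⟫ := fun k z => by
    have := hUpos k (V k z)
    rw [hUVz, real_inner_comm] at this
    exact this
  have hVp : ∀ k z, 0 ≤ ⟪V k z, z⟫ := fun k z => le_trans (by positivity) (hVlow k z)
  have hVle : ∀ k z, ⟪V k z, z⟫ ≤ 1 / α * ‖z‖ ^ 2 := fun k z => by
    have h1 := real_inner_le_norm (V k z) z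
    have h2 := hVlow k z
    have h4 : 0 ≤ (α * ‖V k z‖ - ‖z‖) ^ 2 := sq_nonneg _
    rw [div_mul_eq_mul_div, one_mul, le_div_iff₀ hα]
    nlinarith [norm_nonneg (V k z), norm_nonneg z]
  have hVU' : ∀ k z, ‖z‖ ^ 2 ≤ ‖U k‖ * ⟪V k z, z⟫ := fun k z => by
    have := psd_norm_sq (U k) (hUs k) (hUp k) _ (hUle k) (V k z)
    rw [hUVz, real_inner_comm] at this
    exact this
  have hVμ : ∀ k z, ‖z‖ ^ 2 ≤ μ * ⟪V k z, z⟫ := fun k z =>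
    (hVU' k z).trans (mul_le_mul_of_nonneg_right (hUnorm k) (hVp k z))
  have hVmono : ∀ k z, ⟪V (k + 1) z, z⟫ ≤ (1 + η k) * ⟪V k z, z⟫ := fun k z => by
    have h1 := psd_cs (U k) (hUs k) (hUp k) (V k z) (V (k + 1) z)
    have h2 := hUmono k (V (k + 1) z)
    rw [hUVz] at h1 h2
    rw [real_inner_comm, real_inner_comm (V k z)] at h1
    rw [real_inner_comm] at h2
    have h3 := hVp (k + 1) z
    have h4 := hVp k z
    rcases h3.eq_or_lt with h0 | h0
    · rw [← h0]; have := hη0 k; positivity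
    · have h5 : ⟪V (k + 1) z, z⟫ ^ 2 ≤ ⟪V k z, z⟫ * ((1 + η k) * ⟪V (k + 1) z, z⟫) :=
        h1.trans (mul_le_mul_of_nonneg_left h2 h4)
      nlinarith
  obtain ⟨e0, he0⟩ : ∃ e : H, e ≠ 0 := by
    by_contra hcon
    push Not at hcon
    exact hL (by ext z; rw [hcon z]; simp)
  have hUα : ∀ k, α ≤ ‖U k‖ := fun k => by
    have h1 := (hUpos k e0).le.trans (hUle k e0)
    exact le_of_mul_le_mul_right h1 (by positivity)
  have hγρ : ∀ k, γ k * ‖U k‖ < 2 * β := fun k =>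
    (lt_div_iff₀ (hα.trans_le (hUα k))).1 (hγ k).2
  have hγub : ∀ k, γ k ≤ 2 * β / α := fun k =>
    (hγ k).2.le.trans (div_le_div_of_nonneg_left (by positivity) hα (hUα k))
  have hlam' : ∀ k, lam k ≤ 2 - γ k * ‖U k‖ / (2 * β) - τ := fun k => by
    have h1 := (hlam k).2
    have h2 : 1 / αk k = 2 - γ k * ‖U k‖ / (2 * β) := by
      rw [hαk, one_div_div]; field_simp; ring
    rwa [h2] at h1
  have hlam0 : ∀ k, 0 < lam k := fun k => hlamlb.trans_le (hlam k).1
  set t : ℕ → H := fun k => P k (x k - γ k • U k (B (x k))) with ht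
  set w : ℕ → G := fun k => L (x k) - PQ (L (x k)) with hw
  set c1 : ℝ := lamlb * (τ / 2) / μ with hc1
  set c2 : ℝ := 2 * lamlb * γlb * (1 - 1 / (1 + τ / 2)) with hc2
  have hθ : 0 < 1 - 1 / (1 + τ / 2) := by
    rw [sub_pos, div_lt_one (by positivity)]; linarith
  have hc1p : 0 < c1 := by positivity
  have hc2p : 0 < c2 := by positivity
  have hstep : ∀ p ∈ {z : H | z ∈ C ∧ L z ∈ Q}, ∀ k,
      ⟪V k (x k + lam k • (t k - x k) - p), x k + lam k • (t k - x k) - p⟫ ≤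
        ⟪V k (x k - p), x k - p⟫ - (c1 * ‖x k - t k‖ ^ 2 + c2 * ‖w k‖ ^ 2) := by
    rintro p ⟨hpC, hpQ⟩ k
    have h1 := step_ineq L (V k) (hVs k) (x k) p (t k) (U k (B (x k))) (B (x k)) (w k)
      (γ k) (lam k) ‖U k‖ β τ hβ0 hβL (hVUz k _)
      (fun d => by rw [hBdef, ContinuousLinearMap.adjoint_inner_left])
      (by
        have h2 := hPQproj (L (x k)) (L p) hpQ
        have h3 : L p - PQ (L (x k)) = w k - L (x k - p) := by simp [hw]
        rw [h3, inner_sub_right, real_inner_self_eq_norm_sq] at h2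
        linarith)
      (hPproj k _ p hpC) (hVU' k _) (hγ k).1 (hγρ k) hτ (hlam0 k) (hlam' k) (hVp k _)
    refine h1.trans ?_
    have h4 : c1 * ‖x k - t k‖ ^ 2 ≤ lam k * (τ / 2) * ⟪V k (x k - t k), x k - t k⟫ := by
      calc c1 * ‖x k - t k‖ ^ 2 ≤ c1 * (μ * ⟪V k (x k - t k), x k - t k⟫) :=
            mul_le_mul_of_nonneg_left (hVμ k _) hc1p.le
        _ = lamlb * (τ / 2) * ⟪V k (x k - t k), x k - t k⟫ := by rw [hc1]; field_simp
        _ ≤ _ := by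
            have := hVp k (x k - t k)
            have := (hlam k).1
            gcongr
    have h5 : c2 * ‖w k‖ ^ 2 ≤ 2 * lam k * γ k * (1 - 1 / (1 + τ / 2)) * ‖w k‖ ^ 2 := by
      have := (hlam k).1
      have := hγ' k
      have := (hlam0 k).le
      rw [hc2]; gcongr
    linarith
  set ca : ℝ := √(1 / α) with hca
  set cb : ℝ := 2 * β / α * √μ with hcb
  set ε : ℕ → ℝ := fun k => cb * (lam k * ‖b k‖) + ca * (lam k * ‖a k‖) with hε
  have hεs : Summable ε := (hb.mul_left cb).add (ha.mul_left ca)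
  have hε0 : ∀ k, 0 ≤ ε k := fun k => by
    have := (hlam0 k).le
    simp only [hε]; positivity
  set φ : H → ℕ → ℝ := fun p k => √⟪V k (x k - p), x k - p⟫ with hφ
  have hφ0 : ∀ p k, 0 ≤ φ p k := fun p k => Real.sqrt_nonneg _
  have hφsq : ∀ p k, φ p k ^ 2 = ⟪V k (x k - p), x k - p⟫ := fun p k => Real.sq_sqrt (hVp k _)
  have herr : ∀ p k, φ p (k + 1) ≤ (1 + η k) *
      (√⟪V k (x k + lam k • (t k - x k) - p), x k + lam k • (t k - x k) - p⟫ + ε k) := by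
    intro p k
    set t' : H := P k (x k - γ k • U k (B (x k) + b k)) with ht'
    have h1 : x (k + 1) - p = (x k + lam k • (t k - x k) - p) + lam k • ((t' - t k) + a k) := by
      rw [hx k]; module
    have h2 : φ p (k + 1) ≤ (1 + η k) * √⟪V k (x (k + 1) - p), x (k + 1) - p⟫ := by
      apply Real.sqrt_le_iff.2
      have h3 := hη0 k
      refine ⟨by positivity, ?_⟩
      rw [mul_pow, Real.sq_sqrt (hVp k _)]
      refine (hVmono k _).trans (mul_le_mul_of_nonneg_right ?_ (hVp k _))
      nlinarith
    refine h2.trans (mul_le_mul_of_nonneg_left ?_ (by linarith [hη0 k]))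
    rw [h1]
    refine (psd_tri (V k) (hVs k) (hVp k) _ _).trans ?_
    gcongr
    rw [psd_scale _ _ (hlam0 k).le]
    have h4 : √⟪V k (t' - t k), t' - t k⟫ ≤ cb * ‖b k‖ := by
      have h5 := proj_nonexp (V k) (hVs k) (hVp k) C (P k) (hPmem k) (hPproj k)
        (x k - γ k • U k (B (x k))) (x k - γ k • U k (B (x k) + b k))
      have h6 : (x k - γ k • U k (B (x k))) - (x k - γ k • U k (B (x k) + b k))
          = γ k • U k (b k) := by rw [map_add]; module
      rw [h6, psd_scale _ _ (hγ k).1.le, hVUz, real_inner_comm (U k (b k)) (b k)] at h5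
      have h7 : √⟪U k (b k), b k⟫ ≤ √μ * ‖b k‖ := by
        rw [← Real.sqrt_sq (norm_nonneg (b k)), ← Real.sqrt_mul hμ.le]
        apply Real.sqrt_le_sqrt
        exact (hUle k _).trans (mul_le_mul_of_nonneg_right (hUnorm k) (by positivity))
      have h8 : ⟪V k (t' - t k), t' - t k⟫ = ⟪V k (t k - t'), t k - t'⟫ := by
        rw [← neg_sub (t k) t', map_neg, inner_neg_neg]
      rw [h8]
      refine h5.trans ?_
      rw [hcb, mul_assoc]
      have := hγub k
      gcongr
    have h9 : √⟪V k (a k), a k⟫ ≤ ca * ‖a k‖ := by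
      rw [← Real.sqrt_sq (norm_nonneg (a k)), hca, ← Real.sqrt_mul (by positivity)]
      exact Real.sqrt_le_sqrt (hVle k _)
    have h10 := (psd_tri (V k) (hVs k) (hVp k) (t' - t k) (a k)).trans (add_le_add h4 h9)
    have := mul_le_mul_of_nonneg_left h10 (hlam0 k).le
    refine this.trans (le_of_eq ?_)
    simp only [hε]; ring
  have hφlim : ∀ p ∈ {z : H | z ∈ C ∧ L z ∈ Q}, ∃ l, Tendsto (φ p) atTop (nhds l) := by
    intro p hp
    refine quasi_tendsto η hη0 hηsum ε hε0 hεs (φ p) (hφ0 p) fun k => (herr p k).trans ?_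
    apply mul_le_mul_of_nonneg_left _ (by linarith [hη0 k])
    gcongr
    apply Real.sqrt_le_sqrt
    have := hstep p hp k
    have h1 : 0 ≤ c1 * ‖x k - t k‖ ^ 2 + c2 * ‖w k‖ ^ 2 := by positivity
    linarith
  obtain ⟨p0, hp0⟩ := hΩ
  obtain ⟨l0, hl0⟩ := hφlim p0 hp0
  have hηt : Tendsto η atTop (nhds 0) := hηsum.tendsto_atTop_zero
  have hεt : Tendsto ε atTop (nhds 0) := hεs.tendsto_atTop_zero
  -- the residuals vanish
  have hres : Tendsto (fun k => c1 * ‖x k - t k‖ ^ 2 + c2 * ‖w k‖ ^ 2) atTop (nhds 0) := by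
    have hub : ∀ k, c1 * ‖x k - t k‖ ^ 2 + c2 * ‖w k‖ ^ 2 ≤
        (1 + η k) ^ 2 * (φ p0 k ^ 2 + 2 * φ p0 k * ε k + ε k ^ 2) - φ p0 (k + 1) ^ 2 := by
      intro k
      have h1 := herr p0 k
      have h2 := hstep p0 hp0 k
      have h3 := hφsq p0 k
      have h4 := hε0 k
      have h5 := hη0 k
      have h6 := hφ0 p0 k
      have h7 := hφ0 p0 (k + 1)
      have hq : 0 ≤ c1 * ‖x k - t k‖ ^ 2 + c2 * ‖w k‖ ^ 2 := by positivity
      have hsq := Real.sq_sqrt (hVp k (x k + lam k • (t k - x k) - p0))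
      have hs0 := Real.sqrt_nonneg
        ⟪V k (x k + lam k • (t k - x k) - p0), x k + lam k • (t k - x k) - p0⟫
      rw [← hsq, ← h3] at h2
      generalize √⟪V k (x k + lam k • (t k - x k) - p0), x k + lam k • (t k - x k) - p0⟫ = s
        at *
      generalize c1 * ‖x k - t k‖ ^ 2 + c2 * ‖w k‖ ^ 2 = q at *
      have h8 : s ≤ φ p0 k := by
        apply (sq_le_sq₀ hs0 h6).1
        linarith
      have h9 : φ p0 (k + 1) ^ 2 ≤ (1 + η k) ^ 2 * (s + ε k) ^ 2 := by
        rw [← mul_pow]; exact pow_le_pow_left₀ h7 h1 2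
      have h10 : (s + ε k) ^ 2 ≤ (φ p0 k ^ 2 + 2 * φ p0 k * ε k + ε k ^ 2) - q := by
        have := mul_le_mul_of_nonneg_right h8 h4
        nlinarith
      have h11 := mul_le_mul_of_nonneg_left h10 (sq_nonneg (1 + η k))
      have h12 : q ≤ (1 + η k) ^ 2 * q := le_mul_of_one_le_left hq (one_le_pow₀ (by linarith))
      linarith
    refine squeeze_zero (fun k => by positivity) hub ?_
    have hl1 : Tendsto (fun k => φ p0 (k + 1)) atTop (nhds l0) :=
      hl0.comp (tendsto_add_atTop_nat 1)
    have := (((hηt.const_add 1).pow 2).mul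
      (((hl0.pow 2).add ((hl0.const_mul 2).mul hεt)).add (hεt.pow 2))).sub (hl1.pow 2)
    simpa using this
  have hd0 : Tendsto (fun k => x k - t k) atTop (nhds 0) := by
    rw [tendsto_zero_iff_norm_tendsto_zero]
    have h1 : Tendsto (fun k => ‖x k - t k‖ ^ 2) atTop (nhds 0) := by
      refine squeeze_zero (fun k => by positivity) (fun k => ?_)
        (((hres.const_mul (1 / c1)).trans (by rw [mul_zero])))
      rw [div_mul_eq_mul_div, one_mul, le_div_iff₀ hc1p]
      have : 0 ≤ c2 * ‖w k‖ ^ 2 := by positivity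
      linarith
    simpa using h1.sqrt
  have hw0 : Tendsto w atTop (nhds 0) := by
    rw [tendsto_zero_iff_norm_tendsto_zero]
    have h1 : Tendsto (fun k => ‖w k‖ ^ 2) atTop (nhds 0) := by
      refine squeeze_zero (fun k => by positivity) (fun k => ?_)
        (((hres.const_mul (1 / c2)).trans (by rw [mul_zero])))
      rw [div_mul_eq_mul_div, one_mul, le_div_iff₀ hc2p]
      have : 0 ≤ c1 * ‖x k - t k‖ ^ 2 := by positivity
      linarith
    simpa using h1.sqrt
  -- boundedness
  obtain ⟨R, hR⟩ : ∃ R, ∀ k, ‖x k‖ ≤ R := by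
    obtain ⟨M, hM⟩ := hl0.bddAbove_range
    refine ⟨√μ * M + ‖p0‖, fun k => ?_⟩
    have h1 : ‖x k - p0‖ ≤ √μ * φ p0 k := by
      rw [hφ, ← Real.sqrt_mul hμ.le]
      exact Real.le_sqrt_of_sq_le (hVμ k _)
    have h2 : √μ * φ p0 k ≤ √μ * M :=
      mul_le_mul_of_nonneg_left (hM ⟨k, rfl⟩) (Real.sqrt_nonneg _)
    have h3 := norm_le_norm_sub_add (x k) p0
    linarith
  -- cluster points are solutions
  have hclus : ∀ g : Ultrafilter ℕ, (g : Filter ℕ) ≤ atTop → ∀ p : H,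
      (∀ y, Tendsto (fun k => ⟪x k, y⟫) g (nhds ⟪p, y⟫)) → p ∈ {z : H | z ∈ C ∧ L z ∈ Q} := by
    intro g hg p hp
    constructor
    · set z := V 0 (p - P 0 p) with hz
      have h1 : Tendsto (fun k => ⟪z, t k - P 0 p⟫) g (nhds ⟪z, p - P 0 p⟫) := by
        have h2 : Tendsto (fun k => ⟪z, x k - t k⟫) g (nhds ⟪z, (0 : H)⟫) :=
          (tendsto_const_nhds.inner hd0).mono_left hg
        have h3 := ((hp z).sub h2).sub_const ⟪z, P 0 p⟫
        convert h3 using 2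
        · simp only [inner_sub_right, real_inner_comm z]; ring
        · simp only [inner_sub_right, real_inner_comm z, inner_zero_right]; ring
      have h4 : ⟪z, p - P 0 p⟫ ≤ 0 :=
        le_of_tendsto h1 (Eventually.of_forall fun k => hPproj 0 p (t k) (hPmem k _))
      have h5 := hVμ 0 (p - P 0 p)
      have h6 : ‖p - P 0 p‖ ^ 2 ≤ 0 := h5.trans (mul_nonpos_of_nonneg_of_nonpos hμ.le h4)
      have h7 : p - P 0 p = 0 := by
        rw [← norm_eq_zero]; exact pow_eq_zero_iff (two_ne_zero) |>.1 (le_antisymm h6 (by positivity))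
      rw [sub_eq_zero.1 h7]; exact hPmem 0 p
    · set z := L p - PQ (L p) with hz
      have h1 : Tendsto (fun k => ⟪z, PQ (L (x k)) - PQ (L p)⟫) g (nhds ⟪z, z⟫) := by
        have h2 : Tendsto (fun k => ⟪z, w k⟫) g (nhds ⟪z, (0 : G)⟫) :=
          (tendsto_const_nhds.inner hw0).mono_left hg
        have h3 := ((hp (ContinuousLinearMap.adjoint L z)).sub h2).sub_const ⟪z, PQ (L p)⟫
        simp only [ContinuousLinearMap.adjoint_inner_right] at h3
        convert h3 using 2
        · simp only [hw, inner_sub_right, real_inner_comm z]; ring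
        · conv_lhs => rw [hz, inner_sub_right, ← hz]
          simp only [real_inner_comm z, inner_zero_right]; ring
      have h4 : ⟪z, z⟫ ≤ 0 :=
        le_of_tendsto h1 (Eventually.of_forall fun k => hPQproj (L p) _ (hPQmem _))
      have h7 : z = 0 := inner_self_eq_zero (𝕜 := ℝ) |>.1 (le_antisymm h4 real_inner_self_nonneg)
      rw [sub_eq_zero.1 h7]; exact hPQmem _
  -- uniqueness of cluster points
  have huniq : ∀ g g' : Ultrafilter ℕ, (g : Filter ℕ) ≤ atTop → (g' : Filter ℕ) ≤ atTop →
      ∀ p p' : H, (∀ y, Tendsto (fun k => ⟪x k, y⟫) g (nhds ⟪p, y⟫)) →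
      (∀ y, Tendsto (fun k => ⟪x k, y⟫) g' (nhds ⟪p', y⟫)) → p = p' := by
    intro g g' hg hg' p p' hp hp'
    obtain ⟨l, hl⟩ := hφlim p (hclus g hg p hp)
    obtain ⟨l', hl'⟩ := hφlim p' (hclus g' hg' p' hp')
    obtain ⟨v, hv⟩ := strong_conv η hη0 hηsum V hVs hVp _ hVle hVmono (p - p')
    obtain ⟨q, hq⟩ := strong_conv η hη0 hηsum V hVs hVp _ hVle hVmono p
    obtain ⟨q', hq'⟩ := strong_conv η hη0 hηsum V hVs hVp _ hVle hVmono p'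
    have hmain : ∃ m, Tendsto (fun k => ⟪x k, V k (p - p')⟫) atTop (nhds m) := by
      have h1 := (((hl'.pow 2).sub (hl.pow 2)).add
        ((hq.inner tendsto_const_nhds (y := p)).sub
          (hq'.inner tendsto_const_nhds (y := p')))).const_mul (1 / 2)
      refine ⟨_, h1.congr fun k => ?_⟩
      rw [hφsq, hφsq]
      simp only [map_sub, inner_sub_left, inner_sub_right]
      rw [hVs k (x k) p, hVs k (x k) p', real_inner_comm (x k) (V k p),
        real_inner_comm (x k) (V k p')]
      ring
    obtain ⟨m, hm⟩ := hmain
    have hm' : Tendsto (fun k => ⟪x k, v⟫) atTop (nhds m) := by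
      have h1 : Tendsto (fun k => ⟪x k, V k (p - p') - v⟫) atTop (nhds 0) := by
        have h2 : Tendsto (fun k => R * ‖V k (p - p') - v‖) atTop (nhds 0) := by
          have := (tendsto_iff_norm_sub_tendsto_zero.1 hv).const_mul R
          simpa using this
        refine squeeze_zero_norm (fun k => ?_) h2
        exact (norm_inner_le_norm _ _).trans (mul_le_mul_of_nonneg_right (hR k) (norm_nonneg _))
      have h3 := hm.sub h1
      simpa [inner_sub_right] using h3
    have h1 : ⟪p, v⟫ = m := tendsto_nhds_unique (hp v) (hm'.mono_left hg)
    have h2 : ⟪p', v⟫ = m := tendsto_nhds_unique (hp' v) (hm'.mono_left hg')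
    have h3 : ⟪v, p - p'⟫ = 0 := by
      rw [real_inner_comm, inner_sub_left, h1, h2, sub_self]
    have h4 : Tendsto (fun k => μ * ⟪V k (p - p'), p - p'⟫) atTop (nhds (μ * ⟪v, p - p'⟫)) :=
      (hv.inner tendsto_const_nhds).const_mul μ
    have h5 : ‖p - p'‖ ^ 2 ≤ μ * ⟪v, p - p'⟫ :=
      ge_of_tendsto h4 (Eventually.of_forall fun k => hVμ k _)
    rw [h3, mul_zero] at h5
    have h6 : ‖p - p'‖ = 0 := pow_eq_zero_iff (two_ne_zero) |>.1 (le_antisymm h5 (by positivity))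
    exact sub_eq_zero.1 (norm_eq_zero.1 h6)
  have hg0 : ((Ultrafilter.of atTop : Ultrafilter ℕ) : Filter ℕ) ≤ atTop := Ultrafilter.of_le _
  obtain ⟨p, hp⟩ := ultra_weak x R hR (Ultrafilter.of atTop)
  refine ⟨p, hclus _ hg0 p hp, fun y => ?_⟩
  rw [tendsto_iff_ultrafilter]
  intro g hg
  obtain ⟨p', hp'⟩ := ultra_weak x R hR g
  rw [huniq _ g hg0 hg p p' hp hp']
  exact hp' y
end
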